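/- Let X be a K-convex complex Banach space and p ∈ (1,∞). Then there exist α ∈ [1,2) and C ∈ (0,∞) such that for every n,d ∈ ℕ with 1 ≤ d ≤ n, every function f : {-1,1}^n → X of degree at most d satisfies ‖Δf‖_{L_p({-1,1}^n;X)} ≤ C d^α ‖f‖_{L_p({-1,1}^n;X)}. -/

import Mathlib

open scoped BigOperators ENNReal NNReal

noncomputable section

namespace HammingCube

variable {X : Type*} [NormedAddCommGroup X] [NormedSpace ℂ X]

/-- The sign ±1 associated to a boolean coordinate. -/
def sgn (b : Bool) : ℝ := if b then 1 else -1

/-- The Walsh function `w_A(ε) = ∏_{i ∈ A} ε_i`. -/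
def walsh {n : ℕ} (A : Finset (Fin n)) (ε : Fin n → Bool) : ℝ := ∏ i ∈ A, sgn (ε i)

/-- The Fourier–Walsh coefficient `f̂(A) = 2⁻ⁿ ∑_δ f(δ) w_A(δ)`. -/
def coeff {n : ℕ} (f : (Fin n → Bool) → X) (A : Finset (Fin n)) : X :=
  (2 ^ n : ℝ)⁻¹ • ∑ δ : Fin n → Bool, walsh A δ • f δ

/-- `f` has degree at most `d`: `f̂(A) = 0` whenever `|A| > d`. -/
def degLE {n : ℕ} (f : (Fin n → Bool) → X) (d : ℕ) : Prop :=
  ∀ A : Finset (Fin n), d < A.card → coeff f A = 0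

/-- `f` belongs to the `d`-th tail space: `f̂(A) = 0` whenever `|A| < d`. -/
def tailSpace {n : ℕ} (f : (Fin n → Bool) → X) (d : ℕ) : Prop :=
  ∀ A : Finset (Fin n), A.card < d → coeff f A = 0

/-- The heat semigroup `e^{-tΔ} f = ∑_A e^{-t|A|} f̂(A) w_A`. -/
def heat {n : ℕ} (t : ℝ) (f : (Fin n → Bool) → X) : (Fin n → Bool) → X :=
  fun ε => ∑ A : Finset (Fin n), Real.exp (-t * A.card) • walsh A ε • coeff f A

/-- The hypercube Laplacian `Δ f = ∑_A |A| f̂(A) w_A`. -/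
def lap {n : ℕ} (f : (Fin n → Bool) → X) : (Fin n → Bool) → X :=
  fun ε => ∑ A : Finset (Fin n), (A.card : ℝ) • walsh A ε • coeff f A

/-- The fractional Laplacian `Δ^γ f = ∑_A |A|^γ f̂(A) w_A`. -/
def fracLap {n : ℕ} (γ : ℝ) (f : (Fin n → Bool) → X) : (Fin n → Bool) → X :=
  fun ε => ∑ A : Finset (Fin n), ((A.card : ℝ) ^ γ) • walsh A ε • coeff f A

/-- The `i`-th discrete partial derivative. -/
def pderiv {n : ℕ} (i : Fin n) (f : (Fin n → Bool) → X) : (Fin n → Bool) → X :=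
  fun ε => (2 : ℝ)⁻¹ • (f ε - f (Function.update ε i (!(ε i))))

/-- The vector-valued `L_p` norm `(2⁻ⁿ ∑_ε ‖f(ε)‖^p)^{1/p}` for finite `p`. -/
def lpNorm {n : ℕ} {Y : Type*} [NormedAddCommGroup Y] (p : ℝ)
    (f : (Fin n → Bool) → Y) : ℝ :=
  ((2 ^ n : ℝ)⁻¹ * ∑ ε : Fin n → Bool, ‖f ε‖ ^ p) ^ (1 / p)

/-- The `L_∞` norm `max_ε ‖f(ε)‖`. -/
def linfNorm {n : ℕ} {Y : Type*} [NormedAddCommGroup Y]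
    (f : (Fin n → Bool) → Y) : ℝ :=
  ⨆ ε : Fin n → Bool, ‖f ε‖

/-- The `L_p` norm for `p ∈ [1,∞]` encoded as `p : ℝ≥0∞`. -/
def lpNormE {n : ℕ} {Y : Type*} [NormedAddCommGroup Y] (p : ℝ≥0∞)
    (f : (Fin n → Bool) → Y) : ℝ :=
  if p = ⊤ then linfNorm f else lpNorm p.toReal f

/-- The scalar `L_p` norm of the gradient `‖(∑_i |∂_i f|²)^{1/2}‖_{L_p}`. -/
def gradLpNorm {n : ℕ} (p : ℝ) (f : (Fin n → Bool) → ℂ) : ℝ :=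
  lpNorm p (fun ε => Real.sqrt (∑ i : Fin n, ‖pderiv i f ε‖ ^ 2))

/-- The Rademacher projection `Rad f(ε) = ∑_i f̂({i}) ε_i`. -/
def Rad {n : ℕ} (f : (Fin n → Bool) → X) : (Fin n → Bool) → X :=
  fun ε => ∑ i : Fin n, sgn (ε i) • coeff f {i}

/-- A complex Banach space is `K`-convex if the Rademacher projections are uniformly
bounded on `L_q` for some `q ∈ (1,∞)`. -/
def KConvex (X : Type*) [NormedAddCommGroup X] [NormedSpace ℂ X] : Prop :=
  ∃ q : ℝ, 1 < q ∧ ∃ M : ℝ, ∀ (n : ℕ) (f : (Fin n → Bool) → X),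
    lpNorm q (Rad f) ≤ M * lpNorm q f

/-- `X` has cotype `q` with constant `C`. -/
def HasCotype (X : Type*) [NormedAddCommGroup X] [NormedSpace ℂ X] (q C : ℝ) : Prop :=
  ∀ (n : ℕ) (x : Fin n → X),
    C⁻¹ * (∑ i : Fin n, ‖x i‖ ^ q) ^ (1 / q) ≤
      ((2 ^ n : ℝ)⁻¹ * ∑ ε : Fin n → Bool, ‖∑ i : Fin n, sgn (ε i) • x i‖ ^ q) ^ (1 / q)

/-- The entropy `Ent(h)` of a nonnegative function on the cube. -/
def entropy {n : ℕ} (h : (Fin n → Bool) → ℝ) : ℝ :=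
  (2 ^ n : ℝ)⁻¹ * ∑ ε : Fin n → Bool, h ε * Real.log (h ε) -
    ((2 ^ n : ℝ)⁻¹ * ∑ ε : Fin n → Bool, h ε) *
      Real.log ((2 ^ n : ℝ)⁻¹ * ∑ ε : Fin n → Bool, h ε)

/-- The `L_∞` norm of the gradient `max_ε (∑_i |∂_i f(ε)|²)^{1/2}`. -/
def gradLinfNorm {n : ℕ} (f : (Fin n → Bool) → ℂ) : ℝ :=
  ⨆ ε : Fin n → Bool, Real.sqrt (∑ i : Fin n, ‖pderiv i f ε‖ ^ 2)

/-!
`K`-convexity forces `B`-convexity: if all signed sums of a family of `2ⁿ` unit vectors were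
long, the family would span `ℓ₁` almost isometrically, where the Rademacher projection has norm of
order `√n`. `B`-convexity passes to `L_p({-1,1}ⁿ; X)` with constants independent of `n`.

Following Pisier, apply it to the heat semigroup `T t`, an average of products of the commuting
conditional expectations `E_i`: a favourable choice of signs produces a cancellation in the
expansion of `(1 - T t) ^ N`, so that its norm stays below some `K < 2 ^ N`. By Kato's form of
Beurling's theorem, `Δ` is then sectorial of some angle `γ π / 2 < π / 2`, uniformly in `n`.

For `f` of degree at most `d`, the function `z (z - Δ)⁻¹ f` has poles only at `1, …, d`. On the
complementary sector, multiply it by a Blaschke product vanishing at these poles and apply the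
Phragmén–Lindelöf principle; on the circle `|z| = 2 d ^ (1 + γ)` the Blaschke product is bounded
below, so that `z (z - Δ)⁻¹ f` is bounded there by a multiple of `‖f‖`. As `Δ f` is its coefficient
at `z⁻¹`, Cauchy's estimate gives `‖Δ f‖ ≤ C d ^ (1 + γ) ‖f‖`.
-/

/-! ### Khintchine's inequality in `L₁` -/

lemma abs_sgn (b : Bool) : |sgn b| = 1 := by cases b <;> simp [sgn]

lemma sum_bool_cube_succ {n : ℕ} {M : Type*} [AddCommMonoid M] (g : (Fin (n + 1) → Bool) → M) :
    ∑ δ, g δ = ∑ δ : Fin n → Bool, (g (Fin.cons true δ) + g (Fin.cons false δ)) := by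
  rw [← (Fin.consEquiv fun _ : Fin (n + 1) => Bool).sum_comp, Fintype.sum_prod_type_right]
  simp [Fin.consEquiv]

lemma sum_sq_sum_mul_sgn {n : ℕ} (a : Fin n → ℝ) :
    ∑ δ : Fin n → Bool, (∑ i, a i * sgn (δ i)) ^ 2 = 2 ^ n * ∑ i, a i ^ 2 := by
  induction n with
  | zero => simp
  | succ n ih =>
    have parallelogram : ∀ x S : ℝ, (x * sgn true + S) ^ 2 + (x * sgn false + S) ^ 2
        = 2 * S ^ 2 + 2 * x ^ 2 := fun x S => by
      simp only [sgn, if_true, Bool.false_eq_true, if_false]; ring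
    simp only [sum_bool_cube_succ, Fin.sum_univ_succ, Fin.cons_zero, Fin.cons_succ, parallelogram,
      Finset.sum_add_distrib, ← Finset.mul_sum, ih fun i => a i.succ]
    simp only [Finset.sum_const, Finset.card_univ, Fintype.card_pi, Fintype.card_bool,
      Finset.prod_const, Fintype.card_fin, nsmul_eq_mul, Nat.cast_pow, Nat.cast_ofNat]
    ring

lemma sum_pow_four_sum_mul_sgn_le {n : ℕ} (a : Fin n → ℝ) :
    ∑ δ : Fin n → Bool, (∑ i, a i * sgn (δ i)) ^ 4 ≤ 3 * 2 ^ n * (∑ i, a i ^ 2) ^ 2 := by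
  induction n with
  | zero => simp
  | succ n ih =>
    have expand : ∀ x S : ℝ, (x * sgn true + S) ^ 4 + (x * sgn false + S) ^ 4
        = 2 * S ^ 4 + 12 * x ^ 2 * S ^ 2 + 2 * x ^ 4 := fun x S => by
      simp only [sgn, if_true, Bool.false_eq_true, if_false]; ring
    simp only [sum_bool_cube_succ, Fin.sum_univ_succ, Fin.cons_zero, Fin.cons_succ, expand,
      Finset.sum_add_distrib, ← Finset.mul_sum, sum_sq_sum_mul_sgn fun i => a i.succ]
    have h₄ := ih fun i => a i.succ
    have h₀ : 0 ≤ (2 : ℝ) ^ n * a 0 ^ 4 := by positivity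
    simp only [Finset.sum_const, Finset.card_univ, Fintype.card_pi, Fintype.card_bool,
      Finset.prod_const, Fintype.card_fin, nsmul_eq_mul, Nat.cast_pow, Nat.cast_ofNat]
    linear_combination 2 * h₄ + 4 * h₀

lemma sq_sub_pow_four_le_abs {b : ℝ} (hb : 0 < b) (s : ℝ) :
    3 / (2 * b) * s ^ 2 - 1 / (2 * b ^ 3) * s ^ 4 ≤ |s| := by
  have factor : |s| - (3 / (2 * b) * |s| ^ 2 - 1 / (2 * b ^ 3) * |s| ^ 4)
      = |s| * ((|s| - b) ^ 2 * (|s| + 2 * b)) / (2 * b ^ 3) := by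
    field_simp; ring
  rw [← sq_abs s, ← Even.pow_abs (by decide : Even 4) s, ← sub_nonneg, factor]
  positivity

lemma two_pow_mul_sqrt_sum_sq_le {n : ℕ} (a : Fin n → ℝ) :
    2 ^ n * √(∑ i, a i ^ 2) ≤ √3 * ∑ δ : Fin n → Bool, |∑ i, a i * sgn (δ i)| := by
  set V := ∑ i, a i ^ 2
  have hV₀ : 0 ≤ V := Finset.sum_nonneg fun i _ => sq_nonneg _
  rcases hV₀.eq_or_lt with h | hVpos
  · rw [← h, Real.sqrt_zero, mul_zero]; positivity
  obtain ⟨σ, hσ⟩ : ∃ σ, σ = √V := ⟨_, rfl⟩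
  have hσpos : 0 < σ := hσ ▸ Real.sqrt_pos.2 hVpos
  have hσsq : V = σ ^ 2 := by rw [hσ, Real.sq_sqrt hV₀]
  have h3 : (√3) ^ 2 = (3 : ℝ) := Real.sq_sqrt (by norm_num)
  set b := √3 * σ with hb
  have hbpos : 0 < b := by positivity
  rw [← hσ]
  calc 2 ^ n * σ
      = √3 * (3 / (2 * b) * (2 ^ n * V) - 1 / (2 * b ^ 3) * (3 * 2 ^ n * V ^ 2)) := by
        rw [hσsq, hb]; field_simp; rw [h3]; ring
    _ ≤ √3 * (3 / (2 * b) * ∑ δ : Fin n → Bool, (∑ i, a i * sgn (δ i)) ^ 2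
          - 1 / (2 * b ^ 3) * ∑ δ : Fin n → Bool, (∑ i, a i * sgn (δ i)) ^ 4) := by
        rw [sum_sq_sum_mul_sgn]
        gcongr
        exact sum_pow_four_sum_mul_sgn_le a
    _ ≤ √3 * ∑ δ : Fin n → Bool, |∑ i, a i * sgn (δ i)| := by
        rw [Finset.mul_sum, Finset.mul_sum, ← Finset.sum_sub_distrib]
        gcongr
        exact sq_sub_pow_four_le_abs hbpos _

/-! ### `B`-convexity -/

/-- Quantitative `B`-convexity for families indexed by `ι`: the unit ball of `Y` contains no
family `(y i)` all of whose signed sums have norm close to `card ι`, so that `Y` contains no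
almost isometric copy of `ℓ₁(ι)`. -/
def IsBConvexWith (ι : Type*) [Fintype ι] (Y : Type*) [NormedAddCommGroup Y] [NormedSpace ℝ Y]
    (θ : ℝ) : Prop :=
  ∀ y : ι → Y, (∀ i, ‖y i‖ ≤ 1) → ∃ s : ι → Bool, ‖∑ i, sgn (s i) • y i‖ ≤ θ * Fintype.card ι

section BConvex

variable {ι : Type*} [Fintype ι] {Y : Type*} [NormedAddCommGroup Y] [NormedSpace ℝ Y]

lemma norm_sum_sgn_smul_le (s : ι → Bool) (y : ι → Y) : ‖∑ i, sgn (s i) • y i‖ ≤ ∑ i, ‖y i‖ :=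
  norm_sum_le_of_le _ fun i _ => by rw [norm_smul, Real.norm_eq_abs, abs_sgn, one_mul]

/-- Scaled by `m`, the signed sum with the signs of `a` differs from `∑ a i • y i` by a combination
with coefficients of size `m - |a i|`. -/
lemma sum_abs_sub_le_norm_sum_smul {y : ι → Y} (hy : ∀ i, ‖y i‖ ≤ 1) {D : ℝ}
    (hD : ∀ s : ι → Bool, D ≤ ‖∑ i, sgn (s i) • y i‖) {a : ι → ℝ} {m : ℝ} (hm : 0 ≤ m)
    (ha : ∀ i, |a i| ≤ m) :
    ∑ i, |a i| - m * (Fintype.card ι - D) ≤ ‖∑ i, a i • y i‖ := by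
  let s : ι → Bool := fun i => decide (0 ≤ a i)
  have hs : ∀ i, a i = sgn (s i) * |a i| := fun i => by
    rcases le_or_gt 0 (a i) with h | h
    · simp [s, sgn, h, abs_of_nonneg h]
    · simp [s, sgn, h.not_ge, abs_of_neg h]
  have split : m • ∑ i, sgn (s i) • y i
      = ∑ i, a i • y i + ∑ i, sgn (s i) • (m - |a i|) • y i := by
    rw [Finset.smul_sum, ← Finset.sum_add_distrib]
    refine Finset.sum_congr rfl fun i _ => ?_
    rw [smul_smul, smul_smul, ← add_smul]
    congr 1
    linear_combination -hs i
  have remainder : ‖∑ i, sgn (s i) • (m - |a i|) • y i‖ ≤ ∑ i, (m - |a i|) :=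
    (norm_sum_sgn_smul_le s _).trans <| Finset.sum_le_sum fun i _ => by
      rw [norm_smul, Real.norm_of_nonneg (sub_nonneg.2 (ha i))]
      exact mul_le_of_le_one_right (sub_nonneg.2 (ha i)) (hy i)
  have long : m * D ≤ ‖m • ∑ i, sgn (s i) • y i‖ := by
    rw [norm_smul, Real.norm_of_nonneg hm]
    exact mul_le_mul_of_nonneg_left (hD s) hm
  rw [Finset.sum_sub_distrib, Finset.sum_const, Finset.card_univ, nsmul_eq_mul] at remainder
  linarith [norm_add_le (∑ i, a i • y i) (∑ i, sgn (s i) • (m - |a i|) • y i),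
    split ▸ long]

end BConvex

lemma Rad_apply {n : ℕ} (f : (Fin n → Bool) → X) (ε : Fin n → Bool) :
    Rad f ε = ∑ δ : Fin n → Bool, ((2 ^ n : ℝ)⁻¹ * ∑ i, sgn (ε i) * sgn (δ i)) • f δ := by
  simp only [Rad, coeff, walsh, Finset.prod_singleton, Finset.smul_sum, smul_smul, Finset.mul_sum,
    Finset.sum_smul]
  rw [Finset.sum_comm]
  exact Finset.sum_congr rfl fun δ _ => Finset.sum_congr rfl fun i _ => by congr 1; ring

lemma sqrt_sub_le_norm_Rad {n : ℕ} {f : (Fin n → Bool) → X} (hf : ∀ ε, ‖f ε‖ ≤ 1) {D : ℝ}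
    (hD : ∀ s : (Fin n → Bool) → Bool, D ≤ ‖∑ ε, sgn (s ε) • f ε‖) (ε : Fin n → Bool) :
    √n / √3 - (2 ^ n : ℝ)⁻¹ * n * (2 ^ n - D) ≤ ‖Rad f ε‖ := by
  have kernel_le : ∀ δ : Fin n → Bool,
      |(2 ^ n : ℝ)⁻¹ * ∑ i, sgn (ε i) * sgn (δ i)| ≤ (2 ^ n : ℝ)⁻¹ * n := fun δ => by
    rw [abs_mul, abs_of_pos (by positivity : (0 : ℝ) < (2 ^ n : ℝ)⁻¹)]
    gcongr
    simpa [abs_mul, abs_sgn] using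
      Finset.abs_sum_le_sum_abs (fun i => sgn (ε i) * sgn (δ i)) Finset.univ
  have khintchine : √n / √3 ≤ ∑ δ : Fin n → Bool,
      |(2 ^ n : ℝ)⁻¹ * ∑ i, sgn (ε i) * sgn (δ i)| := by
    have h := two_pow_mul_sqrt_sum_sq_le fun i => sgn (ε i)
    simp only [← sq_abs (sgn _), abs_sgn, one_pow, Finset.sum_const, Finset.card_univ,
      Fintype.card_fin, nsmul_eq_mul, mul_one] at h
    simp only [abs_mul (2 ^ n : ℝ)⁻¹, abs_of_pos (by positivity : (0 : ℝ) < (2 ^ n : ℝ)⁻¹)]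
    rwa [← Finset.mul_sum, div_le_iff₀' (by positivity), mul_left_comm,
      le_inv_mul_iff₀ (by positivity)]
  have h := sum_abs_sub_le_norm_sum_smul hf hD (by positivity) kernel_le
  rw [← Rad_apply, Fintype.card_pi, Finset.prod_const, Fintype.card_bool, Finset.card_univ,
    Fintype.card_fin, Nat.cast_pow, Nat.cast_ofNat] at h
  linarith

lemma lpNorm_nonneg {n : ℕ} {Y : Type*} [NormedAddCommGroup Y] (p : ℝ)
    (f : (Fin n → Bool) → Y) : 0 ≤ lpNorm p f := by
  unfold lpNorm; positivity

lemma lpNorm_mono {n : ℕ} {Y Z : Type*} [NormedAddCommGroup Y] [NormedAddCommGroup Z] {p : ℝ}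
    (hp : 0 ≤ p) {f : (Fin n → Bool) → Y} {g : (Fin n → Bool) → Z} (h : ∀ ε, ‖f ε‖ ≤ ‖g ε‖) :
    lpNorm p f ≤ lpNorm p g := by
  unfold lpNorm
  gcongr with ε
  exact h ε

lemma lpNorm_const {n : ℕ} {Y : Type*} [NormedAddCommGroup Y] {p : ℝ} (hp : 0 < p) (c : Y) :
    lpNorm p (fun _ : Fin n → Bool => c) = ‖c‖ := by
  simp [lpNorm, Real.rpow_rpow_inv (norm_nonneg c) hp.ne']

theorem KConvex.exists_isBConvexWith (hX : KConvex X) :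
    ∃ n : ℕ, ∃ θ < 1, IsBConvexWith (Fin n → Bool) X θ := by
  obtain ⟨q, hq, M, hM⟩ := hX
  have hq₀ : 0 < q := by linarith
  obtain ⟨k, hk⟩ := exists_nat_gt (|M| + 1)
  have hk₀ : (0 : ℝ) < k := by linarith [abs_nonneg M]
  obtain ⟨n, hn⟩ : ∃ n, n = 3 * k ^ 2 := ⟨_, rfl⟩
  have hn₀ : (0 : ℝ) < n := by rw [hn]; push_cast; positivity
  refine ⟨n, 1 - 1 / n, by simpa using hn₀, fun f hf => ?_⟩
  by_contra! hcon
  have hsqrt : √(n : ℝ) / √3 = k := by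
    rw [hn, ← Real.sqrt_div (by positivity)]
    push_cast
    rw [mul_div_cancel_left₀ _ (by norm_num), Real.sqrt_sq hk₀.le]
  have Rad_large : ∀ ε, ‖(k : ℝ) - 1‖ ≤ ‖Rad f ε‖ := fun ε => by
    have h := sqrt_sub_le_norm_Rad hf (fun s => (hcon s).le) ε
    rw [hsqrt] at h
    rw [Real.norm_of_nonneg (by linarith [abs_nonneg M])]
    refine le_trans (le_of_eq ?_) h
    simp only [Fintype.card_pi, Finset.prod_const, Fintype.card_bool, Finset.card_univ,
      Fintype.card_fin, Nat.cast_pow, Nat.cast_ofNat]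
    field_simp
    ring
  have f_small : lpNorm q f ≤ 1 := by
    simpa [lpNorm_const hq₀] using lpNorm_mono (g := fun _ => (1 : ℝ)) hq₀.le (by simpa using hf)
  have : (k : ℝ) - 1 ≤ |M| := calc
    (k : ℝ) - 1 ≤ ‖(k : ℝ) - 1‖ := le_abs_self _
    _ = lpNorm q fun _ : Fin n → Bool => (k : ℝ) - 1 := (lpNorm_const hq₀ _).symm
    _ ≤ lpNorm q (Rad f) := lpNorm_mono hq₀.le Rad_large
    _ ≤ M * lpNorm q f := hM n f
    _ ≤ |M| * 1 := mul_le_mul (le_abs_self M) f_small (lpNorm_nonneg q f) (abs_nonneg M)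
    _ = |M| := mul_one _
  linarith

namespace IsBConvexWith

variable {ι : Type*} [Fintype ι] {Y : Type*} [NormedAddCommGroup Y] [NormedSpace ℝ Y] {θ : ℝ}

lemma nonneg [Nonempty ι] (h : IsBConvexWith ι Y θ) : 0 ≤ θ := by
  obtain ⟨s, hs⟩ := h 0 (by simp)
  exact nonneg_of_mul_nonneg_left ((norm_nonneg _).trans hs) (by simp [Fintype.card_pos])

lemma exists_norm_sum_sgn_smul_le (h : IsBConvexWith ι Y θ) (y : ι → Y) {m : ℝ} (hm₀ : 0 ≤ m)
    (hm : ∀ i, m ≤ ‖y i‖) :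
    ∃ s : ι → Bool, ‖∑ i, sgn (s i) • y i‖ ≤ ∑ i, ‖y i‖ - (1 - θ) * Fintype.card ι * m := by
  let u : ι → Y := fun i => ‖y i‖⁻¹ • y i
  have hu : ∀ i, ‖u i‖ ≤ 1 := fun i => by
    rw [norm_smul, norm_inv, norm_norm]
    exact inv_mul_le_one
  have hy : ∀ i, y i = m • u i + (‖y i‖ - m) • u i := fun i => by
    rcases eq_or_ne (y i) 0 with hi | hi
    · simp [u, hi]
    · rw [← add_smul, add_sub_cancel, smul_inv_smul₀ (norm_ne_zero_iff.2 hi)]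
  obtain ⟨s, hs⟩ := h u hu
  have remainder : ‖∑ i, sgn (s i) • (‖y i‖ - m) • u i‖ ≤ ∑ i, (‖y i‖ - m) :=
    (norm_sum_sgn_smul_le s _).trans <| Finset.sum_le_sum fun i _ => by
      rw [norm_smul, Real.norm_of_nonneg (sub_nonneg.2 (hm i))]
      exact mul_le_of_le_one_right (sub_nonneg.2 (hm i)) (hu i)
  refine ⟨s, ?_⟩
  calc ‖∑ i, sgn (s i) • y i‖
      = ‖m • ∑ i, sgn (s i) • u i + ∑ i, sgn (s i) • (‖y i‖ - m) • u i‖ := by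
        rw [Finset.smul_sum, ← Finset.sum_add_distrib]
        congr 1
        refine Finset.sum_congr rfl fun i _ => ?_
        rw [smul_comm m, ← smul_add, ← hy]
    _ ≤ m * (θ * Fintype.card ι) + ∑ i, (‖y i‖ - m) := by
        refine (norm_add_le _ _).trans (add_le_add ?_ remainder)
        rw [norm_smul, Real.norm_of_nonneg hm₀]
        gcongr
    _ = ∑ i, ‖y i‖ - (1 - θ) * Fintype.card ι * m := by
        rw [Finset.sum_sub_distrib, Finset.sum_const, Finset.card_univ, nsmul_eq_mul]
        ring

end IsBConvexWith

section stdSimplex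

variable {ι : Type*} [Fintype ι] {t : ι → ℝ} {p : ℝ}

lemma prod_le_of_mem_stdSimplex (ht : t ∈ stdSimplex ℝ ι) (i : ι) : ∏ j, t j ≤ t i := by
  classical
  rw [← Finset.mul_prod_erase _ _ (Finset.mem_univ i)]
  exact mul_le_of_le_one_right (ht.1 i) (Finset.prod_le_one (fun j _ => ht.1 j) fun j _ =>
    ht.2 ▸ Finset.single_le_sum (fun k _ => ht.1 k) (Finset.mem_univ j))

lemma one_le_card_rpow_mul_sum_rpow (hp : 1 ≤ p) (ht : t ∈ stdSimplex ℝ ι) {s : Finset ι}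
    (hs : ∑ i ∈ s, t i = 1) : 1 ≤ (s.card : ℝ) ^ (p - 1) * ∑ i ∈ s, t i ^ p := by
  simpa [hs, abs_of_nonneg (ht.1 _)] using Real.rpow_sum_le_const_mul_sum_rpow s t hp

lemma one_lt_card_rpow_mul_sum_rpow (hp : 1 < p) (ht : t ∈ stdSimplex ℝ ι)
    (h₀ : ∏ i, t i = 0) : 1 < (Fintype.card ι : ℝ) ^ (p - 1) * ∑ i, t i ^ p := by
  classical
  obtain ⟨i, hi, hti⟩ := Finset.prod_eq_zero_iff.1 h₀
  have hsum : ∑ j ∈ Finset.univ.erase i, t j = 1 := by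
    rw [← ht.2, ← Finset.add_sum_erase _ _ hi, hti, zero_add]
  have hle := one_le_card_rpow_mul_sum_rpow hp.le ht hsum
  have hpos : 0 < ∑ j ∈ Finset.univ.erase i, t j ^ p :=
    pos_of_mul_pos_right (zero_lt_one.trans_le hle) (by positivity)
  refine hle.trans_lt ?_
  rw [← Finset.add_sum_erase _ _ hi, hti, Real.zero_rpow (by linarith), zero_add]
  have hcard : (Finset.univ.erase i).card < Fintype.card ι := Finset.card_erase_lt_of_mem hi
  gcongr

lemma one_sub_mul_prod_nonneg {θ : ℝ} (hθ₀ : 0 ≤ θ) (hθ : θ < 1) (ht : t ∈ stdSimplex ℝ ι) :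
    0 ≤ 1 - (1 - θ) * ∏ i, t i := by
  have hprod : ∏ i, t i ≤ 1 := Finset.prod_le_one (fun i _ => ht.1 i) fun i _ =>
    ht.2 ▸ Finset.single_le_sum (fun k _ => ht.1 k) (Finset.mem_univ i)
  nlinarith

lemma two_pow_sub_one_add_rpow_lt {θ : ℝ} (hθ₀ : 0 ≤ θ) (hθ : θ < 1) (hp : 1 < p)
    (ht : t ∈ stdSimplex ℝ ι) :
    2 ^ Fintype.card ι - 1 + (1 - (1 - θ) * ∏ i, t i) ^ p
      < 2 ^ Fintype.card ι * ((Fintype.card ι : ℝ) ^ (p - 1) * ∑ i, t i ^ p) := by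
  have hpow : (0 : ℝ) < 2 ^ Fintype.card ι := by positivity
  rcases (Finset.prod_nonneg fun i _ => ht.1 i).eq_or_lt with h | h
  · rw [← h, mul_zero, sub_zero, Real.one_rpow, sub_add_cancel]
    exact lt_mul_of_one_lt_right hpow (one_lt_card_rpow_mul_sum_rpow hp ht h.symm)
  · have hlt : (1 - (1 - θ) * ∏ i, t i) ^ p < 1 :=
      Real.rpow_lt_one (one_sub_mul_prod_nonneg hθ₀ hθ ht) (by nlinarith) (by linarith)
    have hle := le_mul_of_one_le_right hpow.le (one_le_card_rpow_mul_sum_rpow hp.le ht ht.2)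
    rw [Finset.card_univ] at hle
    linarith

/-- By compactness of the simplex, the pointwise strict inequality
`two_pow_sub_one_add_rpow_lt` holds with a uniform factor `ρ < 1`. -/
lemma exists_two_pow_sub_one_add_rpow_le [Nonempty ι] {θ : ℝ} (hθ₀ : 0 ≤ θ) (hθ : θ < 1)
    (hp : 1 < p) :
    ∃ ρ, 0 ≤ ρ ∧ ρ < 1 ∧ ∀ t ∈ stdSimplex ℝ ι,
      2 ^ Fintype.card ι - 1 + (1 - (1 - θ) * ∏ i, t i) ^ p
        ≤ ρ * (2 ^ Fintype.card ι * ((Fintype.card ι : ℝ) ^ (p - 1) * ∑ i, t i ^ p)) := by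
  classical
  have hp₀ : 0 ≤ p := by linarith
  let num : (ι → ℝ) → ℝ := fun t => 2 ^ Fintype.card ι - 1 + (1 - (1 - θ) * ∏ i, t i) ^ p
  let den : (ι → ℝ) → ℝ :=
    fun t => 2 ^ Fintype.card ι * ((Fintype.card ι : ℝ) ^ (p - 1) * ∑ i, t i ^ p)
  have num_nonneg : ∀ t ∈ stdSimplex ℝ ι, 0 ≤ num t := fun t ht =>
    add_nonneg (sub_nonneg.2 (one_le_pow₀ one_le_two))
      (Real.rpow_nonneg (one_sub_mul_prod_nonneg hθ₀ hθ ht) p)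
  have num_lt_den : ∀ t ∈ stdSimplex ℝ ι, num t < den t := fun t ht =>
    two_pow_sub_one_add_rpow_lt hθ₀ hθ hp ht
  have den_pos : ∀ t ∈ stdSimplex ℝ ι, 0 < den t := fun t ht =>
    (num_nonneg t ht).trans_lt (num_lt_den t ht)
  have hcont : ContinuousOn (fun t => num t / den t) (stdSimplex ℝ ι) :=
    ContinuousOn.div (by fun_prop) (by fun_prop) fun t ht => (den_pos t ht).ne'
  obtain ⟨t₀, ht₀, hmax⟩ := (isCompact_stdSimplex ℝ ι).exists_isMaxOn
    ⟨_, single_mem_stdSimplex ℝ (Classical.arbitrary ι)⟩ hcont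
  exact ⟨num t₀ / den t₀, div_nonneg (num_nonneg t₀ ht₀) (den_pos t₀ ht₀).le,
    (div_lt_one (den_pos t₀ ht₀)).2 (num_lt_den t₀ ht₀),
    fun t ht => (div_le_iff₀ (den_pos t ht)).1 (hmax ht)⟩

end stdSimplex

namespace IsBConvexWith

variable {ι : Type*} [Fintype ι] [Nonempty ι] [DecidableEq ι] {Y : Type*} [NormedAddCommGroup Y]
  [NormedSpace ℝ Y] {θ p : ℝ}

lemma sum_norm_rpow_le (h : IsBConvexWith ι Y θ) (hθ : θ < 1) (hp : 1 < p) {t : ι → ℝ}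
    (ht : t ∈ stdSimplex ℝ ι) {y : ι → Y} (hy : ∀ i, ‖y i‖ = t i) :
    ∑ s : ι → Bool, ‖∑ i, sgn (s i) • y i‖ ^ p
      ≤ 2 ^ Fintype.card ι - 1 + (1 - (1 - θ) * ∏ i, t i) ^ p := by
  classical
  have hprod : 0 ≤ ∏ i, t i := Finset.prod_nonneg fun i _ => ht.1 i
  obtain ⟨s₀, hs₀⟩ := h.exists_norm_sum_sgn_smul_le y hprod
    fun i => (prod_le_of_mem_stdSimplex ht i).trans (hy i).ge
  have hsum : ∑ i, ‖y i‖ = 1 := by simp only [hy, ht.2]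
  have hcard : (1 : ℝ) ≤ Fintype.card ι := by exact_mod_cast Fintype.card_pos
  have short : ‖∑ i, sgn (s₀ i) • y i‖ ≤ 1 - (1 - θ) * ∏ i, t i := by
    refine hs₀.trans ?_
    rw [hsum]
    gcongr
    exact le_mul_of_one_le_right (by linarith) hcard
  have others : ∑ s ∈ Finset.univ.erase s₀, ‖∑ i, sgn (s i) • y i‖ ^ p
      ≤ 2 ^ Fintype.card ι - 1 := by
    refine (Finset.sum_le_card_nsmul _ _ 1 fun s _ => Real.rpow_le_one (norm_nonneg _)
      ((norm_sum_sgn_smul_le s y).trans hsum.le) (by linarith)).trans (le_of_eq ?_)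
    simp [Finset.card_erase_of_mem]
  rw [← Finset.sum_erase_add _ _ (Finset.mem_univ s₀)]
  gcongr

lemma exists_sum_norm_rpow_le (h : IsBConvexWith ι Y θ) (hθ : θ < 1) (hp : 1 < p) :
    ∃ ρ, 0 ≤ ρ ∧ ρ < 1 ∧ ∀ y : ι → Y, ∑ s : ι → Bool, ‖∑ i, sgn (s i) • y i‖ ^ p
      ≤ ρ * (2 ^ Fintype.card ι * ((Fintype.card ι : ℝ) ^ (p - 1) * ∑ i, ‖y i‖ ^ p)) := by
  obtain ⟨ρ, hρ₀, hρ, hratio⟩ := exists_two_pow_sub_one_add_rpow_le (ι := ι) h.nonneg hθ hp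
  refine ⟨ρ, hρ₀, hρ, fun y => ?_⟩
  obtain ⟨S, hS⟩ : ∃ S, S = ∑ i, ‖y i‖ := ⟨_, rfl⟩
  have S_nonneg : 0 ≤ S := hS ▸ Finset.sum_nonneg fun i _ => norm_nonneg (y i)
  rcases S_nonneg.eq_or_lt with hS₀ | hS₀
  · have hy : ∀ i, y i = 0 := fun i => norm_eq_zero.1 <|
      (Finset.sum_eq_zero_iff_of_nonneg fun i _ => norm_nonneg (y i)).1 (hS ▸ hS₀.symm) i (by simp)
    simp [hy, Real.zero_rpow (by linarith : p ≠ 0)]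
  have ht : (fun i => ‖S⁻¹ • y i‖) ∈ stdSimplex ℝ ι :=
    ⟨fun i => norm_nonneg _, by simp [norm_smul, ← Finset.mul_sum, ← hS, abs_of_pos hS₀, hS₀.ne']⟩
  have unit_case := (h.sum_norm_rpow_le hθ hp ht fun i => rfl).trans (hratio _ ht)
  have hscale : 0 < S⁻¹ ^ p := by positivity
  simp only [smul_comm _ S⁻¹, ← Finset.smul_sum, norm_smul S⁻¹,
    Real.norm_of_nonneg (inv_nonneg.2 hS₀.le), Real.mul_rpow (inv_nonneg.2 hS₀.le) (norm_nonneg _),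
    ← Finset.mul_sum] at unit_case
  refine le_of_mul_le_mul_left (unit_case.trans (le_of_eq ?_)) hscale
  ring

end IsBConvexWith

lemma norm_rpow_eq_sum {α : Type*} [Fintype α] {Y : Type*} [NormedAddCommGroup Y] {p : ℝ}
    (hp : 0 < p) [Fact (1 ≤ ENNReal.ofReal p)]
    (f : PiLp (ENNReal.ofReal p) fun _ : α => Y) : ‖f‖ ^ p = ∑ a, ‖f a‖ ^ p := by
  have hp' : (ENNReal.ofReal p).toReal = p := ENNReal.toReal_ofReal hp.le
  rw [PiLp.norm_eq_sum (by rwa [hp']), hp', ← Real.rpow_mul (by positivity),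
    one_div_mul_cancel hp.ne', Real.rpow_one]

theorem IsBConvexWith.exists_piLp {ι : Type*} [Fintype ι] [Nonempty ι] {Y : Type*}
    [NormedAddCommGroup Y] [NormedSpace ℝ Y] {θ p : ℝ} (h : IsBConvexWith ι Y θ) (hθ : θ < 1)
    (hp : 1 < p) [Fact (1 ≤ ENNReal.ofReal p)] :
    ∃ θ' < 1, ∀ (α : Type) [Fintype α],
      IsBConvexWith ι (PiLp (ENNReal.ofReal p) fun _ : α => Y) θ' := by
  classical
  have hp₀ : 0 < p := by linarith
  obtain ⟨ρ, hρ₀, hρ, hsum⟩ := h.exists_sum_norm_rpow_le hθ hp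
  refine ⟨ρ ^ (1 / p), Real.rpow_lt_one hρ₀ hρ (by positivity), fun α _ y hy => ?_⟩
  obtain ⟨N, hN⟩ : ∃ N : ℝ, N = Fintype.card ι := ⟨_, rfl⟩
  have hNpos : 0 < N := by simp [hN, Fintype.card_pos]
  have coordinates : ∑ s : ι → Bool, ‖∑ i, sgn (s i) • y i‖ ^ p
      ≤ ∑ _s : ι → Bool, (ρ ^ (1 / p) * N) ^ p := calc
    _ = ∑ a, ∑ s : ι → Bool, ‖∑ i, sgn (s i) • y i a‖ ^ p := by
        simp only [norm_rpow_eq_sum hp₀]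
        rw [Finset.sum_comm]
        simp
    _ ≤ ∑ a, ρ * (2 ^ Fintype.card ι * (N ^ (p - 1) * ∑ i, ‖y i a‖ ^ p)) :=
        Finset.sum_le_sum fun a _ => hN ▸ hsum fun i => y i a
    _ = ρ * (2 ^ Fintype.card ι * (N ^ (p - 1) * ∑ i, ‖y i‖ ^ p)) := by
        simp only [norm_rpow_eq_sum hp₀, ← Finset.mul_sum]
        rw [Finset.sum_comm]
    _ ≤ ρ * (2 ^ Fintype.card ι * (N ^ (p - 1) * ∑ _i : ι, 1)) := by
        gcongr with i
        exact Real.rpow_le_one (norm_nonneg _) (hy i) hp₀.le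
    _ = _ := by
        rw [Real.mul_rpow (by positivity) hNpos.le, ← Real.rpow_mul hρ₀, one_div_mul_cancel hp₀.ne',
          Real.rpow_one, Real.rpow_sub_one hNpos.ne']
        simp only [Finset.sum_const, Finset.card_univ, Fintype.card_pi, Fintype.card_bool,
          Finset.prod_const, nsmul_eq_mul, mul_one, ← hN, div_mul_cancel₀ _ hNpos.ne',
          Nat.cast_pow, Nat.cast_ofNat]
        ring
  obtain ⟨s, -, hs⟩ := Finset.exists_le_of_sum_le Finset.univ_nonempty coordinates
  exact ⟨s, hN ▸ (Real.rpow_le_rpow_iff (norm_nonneg _) (by positivity) hp₀).1 hs⟩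

/-! ### Fourier multipliers -/

section Walsh

variable {n : ℕ}

lemma sum_walsh_mul_walsh (A B : Finset (Fin n)) :
    ∑ ε : Fin n → Bool, walsh A ε * walsh B ε = if A = B then 2 ^ n else 0 := by
  let g : Fin n → Bool → ℝ := fun i b => (if i ∈ A then sgn b else 1) * if i ∈ B then sgn b else 1
  have hg : ∀ ε : Fin n → Bool, walsh A ε * walsh B ε = ∏ i, g i (ε i) := fun ε => by
    simp only [g, walsh, Finset.prod_mul_distrib, Fintype.prod_ite_mem]
  simp only [hg]
  rw [← Fintype.piFinset_univ, ← Finset.prod_univ_sum]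
  split_ifs with h
  · subst h
    have : ∀ i, ∑ b, g i b = 2 := fun i => by by_cases hi : i ∈ A <;> norm_num [g, hi, sgn]
    simp only [this, Finset.prod_const, Finset.card_univ, Fintype.card_fin]
  · obtain ⟨i, hi⟩ := not_forall.1 (mt Finset.ext h)
    refine Finset.prod_eq_zero (Finset.mem_univ i) ?_
    by_cases hA : i ∈ A <;> by_cases hB : i ∈ B <;> simp_all [g, sgn]

lemma sum_walsh_mul_walsh_apply (ε δ : Fin n → Bool) :
    ∑ A : Finset (Fin n), walsh A ε * walsh A δ = if ε = δ then 2 ^ n else 0 := by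
  simp only [walsh, ← Finset.prod_mul_distrib]
  rw [← Finset.powerset_univ, ← Finset.prod_one_add]
  split_ifs with h
  · subst h
    have : ∀ i, 1 + sgn (ε i) * sgn (ε i) = 2 := fun i => by cases h : ε i <;> norm_num [sgn]
    simp [this]
  · obtain ⟨i, hi⟩ := Function.ne_iff.1 h
    refine Finset.prod_eq_zero (Finset.mem_univ i) ?_
    cases hε : ε i <;> cases hδ : δ i <;> simp_all [sgn]

lemma sum_walsh_smul_coeff (f : (Fin n → Bool) → X) (ε : Fin n → Bool) :
    ∑ A : Finset (Fin n), walsh A ε • coeff f A = f ε := by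
  simp only [coeff, smul_comm _ (2 ^ n : ℝ)⁻¹, ← Finset.smul_sum]
  simp only [Finset.smul_sum (r := walsh _ ε), smul_smul (walsh _ ε)]
  rw [Finset.sum_comm]
  simp [← Finset.sum_smul, sum_walsh_mul_walsh_apply]

lemma coeff_sum_walsh_smul (c : Finset (Fin n) → X) (B : Finset (Fin n)) :
    coeff (fun ε => ∑ A, walsh A ε • c A) B = c B := by
  simp only [coeff, Finset.smul_sum (r := walsh _ _), smul_smul (walsh _ _)]
  rw [Finset.sum_comm]
  simp [← Finset.sum_smul, sum_walsh_mul_walsh]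

lemma coeff_add (f g : (Fin n → Bool) → X) (A : Finset (Fin n)) :
    coeff (f + g) A = coeff f A + coeff g A := by
  simp [coeff, smul_add, Finset.sum_add_distrib]

lemma coeff_smul (a : ℂ) (f : (Fin n → Bool) → X) (A : Finset (Fin n)) :
    coeff (a • f) A = a • coeff f A := by
  simp only [coeff, Pi.smul_apply, smul_comm _ a, ← Finset.smul_sum]

end Walsh

/-- The space `L_q({-1,1}ⁿ; X)` with respect to counting measure. -/
abbrev CubeLp (q : ℝ≥0∞) (n : ℕ) (X : Type*) : Type _ :=
  PiLp q fun _ : Fin n → Bool => X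

section Multiplier

variable {q : ℝ≥0∞} [Fact (1 ≤ q)] {n : ℕ}

/-- The Fourier multiplier `f ↦ ∑_A m(A) f̂(A) w_A` on `L_q({-1,1}ⁿ; X)`, as a homomorphism from
the algebra of symbols `m` to the bounded operators. -/
def multiplier (q : ℝ≥0∞) [Fact (1 ≤ q)] (n : ℕ) (X : Type*) [NormedAddCommGroup X]
    [NormedSpace ℂ X] : (Finset (Fin n) → ℂ) →ₐ[ℂ] (CubeLp q n X →L[ℂ] CubeLp q n X) where
  toFun m :=
    { toFun f := WithLp.toLp q fun ε => ∑ A, walsh A ε • m A • coeff f A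
      map_add' f g := by
        ext ε; simp [coeff_add, Finset.sum_add_distrib]
      map_smul' a f := by
        ext ε; simp [coeff_smul, smul_comm _ a, Finset.smul_sum]
      cont := by unfold coeff; fun_prop }
  map_one' := by ext f ε; simp [sum_walsh_smul_coeff]
  map_mul' m m' := by ext f ε; simp [coeff_sum_walsh_smul, mul_smul]
  map_zero' := by ext f ε; simp
  map_add' m m' := by ext f ε; simp [add_smul, Finset.sum_add_distrib]
  commutes' a := by
    ext f ε
    simp [Algebra.algebraMap_eq_smul_one, smul_comm _ a, ← Finset.smul_sum, sum_walsh_smul_coeff]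

lemma multiplier_apply (m : Finset (Fin n) → ℂ) (f : CubeLp q n X) (ε : Fin n → Bool) :
    multiplier q n X m f ε = ∑ A, walsh A ε • m A • coeff f A := rfl

/-- The symbol of the conditional expectation `E_i f(ε) = (f(ε) + f(ε₁, …, -ε_i, …, ε_n)) / 2`. -/
def condExpSymbol (i : Fin n) : Finset (Fin n) → ℂ := fun A => if i ∈ A then 0 else 1

lemma isIdempotentElem_condExpSymbol (i : Fin n) : IsIdempotentElem (condExpSymbol i) := by
  ext A; simp [condExpSymbol]

/-- The involution of the cube which changes the sign of the `i`-th coordinate. -/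
def flipCoord (i : Fin n) : (Fin n → Bool) ≃ (Fin n → Bool) :=
  Equiv.piCongrRight (Function.update (fun _ => Equiv.refl Bool) i Equiv.boolNot)

lemma walsh_flipCoord (i : Fin n) (A : Finset (Fin n)) (ε : Fin n → Bool) :
    walsh A (flipCoord i ε) = (if i ∈ A then -1 else 1) * walsh A ε := by
  have : ∀ j, sgn (flipCoord i ε j) = (if j = i then -1 else 1) * sgn (ε j) := fun j => by
    rcases eq_or_ne j i with rfl | h
    · cases h : ε j <;> simp [flipCoord, sgn, h]
    · simp [flipCoord, h]
  simp only [walsh, this, Finset.prod_mul_distrib, Finset.prod_ite_eq']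

lemma norm_multiplier_condExpSymbol_le (i : Fin n) :
    ‖multiplier q n X (condExpSymbol i)‖ ≤ 1 := by
  refine ContinuousLinearMap.opNorm_le_bound _ zero_le_one fun f => ?_
  let U := LinearIsometryEquiv.piLpCongrLeft q ℂ X (flipCoord i).symm
  have average : multiplier q n X (condExpSymbol i) f = (2 : ℝ)⁻¹ • (f + U f) := by
    ext ε
    have hU : U f ε = f (flipCoord i ε) := rfl
    rw [PiLp.smul_apply, PiLp.add_apply, hU, ← sum_walsh_smul_coeff f, ← sum_walsh_smul_coeff f,
      multiplier_apply, ← Finset.sum_add_distrib, Finset.smul_sum]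
    refine Finset.sum_congr rfl fun A _ => ?_
    rw [walsh_flipCoord, condExpSymbol]
    split_ifs <;> module
  rw [average, norm_smul, one_mul, norm_inv, Real.norm_two, inv_mul_le_iff₀ two_pos, two_mul]
  exact (norm_add_le _ _).trans_eq (by rw [U.norm_map])

end Multiplier

/-! ### Pisier's estimate for products of conditional expectations -/

section Pisier

variable {E : Type*} [NormedAddCommGroup E] [NormedSpace ℂ E]

lemma IsBConvexWith.exists_norm_le_mul {ι : Type*} [Fintype ι] {θ : ℝ}
    (h : IsBConvexWith ι E θ) {y : ι → E} {r : ℝ} (hr : 0 ≤ r) (hy : ∀ i, ‖y i‖ ≤ r) :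
    ∃ s : ι → Bool, ‖∑ i, sgn (s i) • y i‖ ≤ θ * Fintype.card ι * r := by
  rcases hr.eq_or_lt with rfl | hr
  · exact ⟨fun _ => true, by simp [fun i => norm_le_zero_iff.1 (hy i)]⟩
  obtain ⟨s, hs⟩ := h (fun i => r⁻¹ • y i) fun i => by
    rw [norm_smul, Real.norm_of_nonneg (inv_nonneg.2 hr.le), inv_mul_le_one₀ hr]
    exact hy i
  refine ⟨s, ?_⟩
  simp only [smul_comm _ r⁻¹, ← Finset.smul_sum] at hs
  rwa [norm_smul, Real.norm_of_nonneg (inv_nonneg.2 hr.le), inv_mul_le_iff₀' hr] at hs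

variable {R : Type*} [CommRing R] [Algebra ℂ R] (ρ : R →ₐ[ℂ] (E →L[ℂ] E))

lemma norm_map_prod_le_one {ι : Type*} {s : Finset ι} {a : ι → R} (ha : ∀ i ∈ s, ‖ρ (a i)‖ ≤ 1) :
    ‖ρ (∏ i ∈ s, a i)‖ ≤ 1 := by
  refine Finset.prod_induction a (fun b => ‖ρ b‖ ≤ 1) (fun b c hb hc => ?_) ?_ ha
  · rw [map_mul]
    exact (norm_mul_le _ _).trans (mul_le_one₀ hb (norm_nonneg _) hc)
  · rw [map_one]
    exact ContinuousLinearMap.norm_id_le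

lemma norm_map_convex_comb_one_le_one {e : R} (he : ‖ρ e‖ ≤ 1) {a : ℝ} (ha₀ : 0 ≤ a)
    (ha₁ : a ≤ 1) : ‖ρ (((1 - a : ℝ) : ℂ) • e + (a : ℂ) • 1)‖ ≤ 1 := by
  have ha₁' : 0 ≤ 1 - a := sub_nonneg.2 ha₁
  rw [map_add, map_smul, map_smul, map_one]
  calc _ ≤ (1 - a) * ‖ρ e‖ + a * ‖(1 : E →L[ℂ] E)‖ := (norm_add_le _ _).trans_eq <| by
        rw [norm_smul, norm_smul, Complex.norm_of_nonneg ha₁', Complex.norm_of_nonneg ha₀]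
    _ ≤ (1 - a) * 1 + a * 1 := by gcongr; exact ContinuousLinearMap.norm_id_le
    _ = 1 := by ring

variable {ι : Type*} [Fintype ι] {θ : ℝ}

/-- Put `u = ∏ j ∈ B, -e j`. As `e i` is idempotent, `∏ j ∈ insert i B, -e j` is `u * e i` if
`i ∈ B` and `-(u * e i)` otherwise, so that every choice of signs is realised by some `B`. -/
lemma IsBConvexWith.exists_norm_sum_insert_le [DecidableEq ι] (h : IsBConvexWith ι E θ) {e : ι → R}
    (he : ∀ i, IsIdempotentElem (e i)) (hρ : ∀ i, ‖ρ (e i)‖ ≤ 1) (f : E) :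
    ∃ B : Finset ι, ‖∑ i, ρ (∏ j ∈ insert i B, -e j) f‖ ≤ θ * Fintype.card ι * ‖f‖ := by
  obtain ⟨s, hs⟩ := h.exists_norm_le_mul (norm_nonneg f) fun i =>
    (ρ (e i)).le_of_opNorm_le_of_le (hρ i) le_rfl |>.trans_eq (one_mul _)
  set B : Finset ι := Finset.univ.filter fun i => s i = true with hB
  set u : R := ∏ j ∈ B, -e j with hu
  have insert_eq : ∀ i, ρ (∏ j ∈ insert i B, -e j) f = sgn (s i) • ρ u (ρ (e i) f) := fun i => by
    cases hi : s i
    · rw [Finset.prod_insert (by simp [hB, hi]), ← hu, mul_comm]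
      simp [sgn]
    · have hiB : i ∈ B := by simp [hB, hi]
      have absorb : u * e i = u := by
        rw [hu, ← Finset.mul_prod_erase B _ hiB, mul_right_comm, neg_mul, (he i).eq]
      rw [Finset.insert_eq_of_mem hiB, ← hu]
      nth_rewrite 1 [← absorb]
      simp [sgn]
  have u_contr : ‖ρ u‖ ≤ 1 := norm_map_prod_le_one ρ fun i _ => by simpa using hρ i
  refine ⟨B, ?_⟩
  calc ‖∑ i, ρ (∏ j ∈ insert i B, -e j) f‖ = ‖ρ u (∑ i, sgn (s i) • ρ (e i) f)‖ := by
        simp only [insert_eq, map_sum, ContinuousLinearMap.map_smul_of_tower]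
    _ ≤ 1 * (θ * Fintype.card ι * ‖f‖) := (ρ u).le_of_opNorm_le_of_le u_contr hs
    _ = _ := one_mul _

variable [Nonempty ι]

theorem IsBConvexWith.norm_map_prod_one_sub_le (h : IsBConvexWith ι E θ) {e : ι → R}
    (he : ∀ i, IsIdempotentElem (e i)) (hρ : ∀ i, ‖ρ (e i)‖ ≤ 1) :
    ‖ρ (∏ i, (1 - e i))‖ ≤ 2 ^ Fintype.card ι - 1 + θ := by
  classical
  have hpow : (1 : ℝ) ≤ 2 ^ Fintype.card ι := one_le_pow₀ one_le_two
  have hN : (0 : ℝ) < Fintype.card ι := by exact_mod_cast Fintype.card_pos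
  refine ContinuousLinearMap.opNorm_le_bound _ (by linarith [h.nonneg]) fun f => ?_
  let v : Finset ι → E := fun A => ρ (∏ i ∈ A, -e i) f
  have v_le : ∀ A, ‖v A‖ ≤ ‖f‖ := fun A =>
    ((ρ _).le_of_opNorm_le_of_le (norm_map_prod_le_one ρ fun i _ => by simpa using hρ i)
      le_rfl).trans_eq (one_mul _)
  have expand : ρ (∏ i, (1 - e i)) f = ∑ A, v A := by
    simp only [sub_eq_add_neg, Finset.prod_one_add, Finset.powerset_univ, map_sum, v,
      sum_apply]
  obtain ⟨B, hB⟩ := h.exists_norm_sum_insert_le ρ he hρ f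
  have others : ∀ i, ‖∑ A ∈ Finset.univ.erase (insert i B), v A‖
      ≤ (2 ^ Fintype.card ι - 1) * ‖f‖ := fun i => by
    refine (norm_sum_le_of_le _ fun A _ => v_le A).trans_eq ?_
    simp [Finset.card_erase_of_mem]
  have average : (Fintype.card ι : ℝ) • ∑ A, v A
      = ∑ i, v (insert i B) + ∑ i, ∑ A ∈ Finset.univ.erase (insert i B), v A := by
    rw [← Finset.sum_add_distrib]
    simp only [Finset.add_sum_erase _ v (Finset.mem_univ _), Finset.sum_const, Finset.card_univ,
      Nat.cast_smul_eq_nsmul]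
  rw [expand]
  refine le_of_mul_le_mul_left ?_ hN
  calc (Fintype.card ι : ℝ) * ‖∑ A, v A‖ = ‖(Fintype.card ι : ℝ) • ∑ A, v A‖ := by
        rw [norm_smul, Real.norm_of_nonneg hN.le]
    _ ≤ θ * Fintype.card ι * ‖f‖ + ∑ _i : ι, (2 ^ Fintype.card ι - 1) * ‖f‖ :=
        average ▸ (norm_add_le _ _).trans
          (add_le_add hB (norm_sum_le_of_le _ fun i _ => others i))
    _ = Fintype.card ι * ((2 ^ Fintype.card ι - 1 + θ) * ‖f‖) := by
        rw [Finset.sum_const, Finset.card_univ, nsmul_eq_mul]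
        ring

theorem IsBConvexWith.norm_map_one_sub_sum_pow_le (h : IsBConvexWith ι E θ) {κ : Type*}
    [Fintype κ] {e : κ → R} (he : ∀ k, IsIdempotentElem (e k)) (hρ : ∀ k, ‖ρ (e k)‖ ≤ 1)
    {w : κ → ℝ} (hw : w ∈ stdSimplex ℝ κ) :
    ‖ρ (1 - ∑ k, (w k : ℂ) • e k) ^ Fintype.card ι‖ ≤ 2 ^ Fintype.card ι - 1 + θ := by
  classical
  have hsum : ∑ k, (w k : ℂ) = 1 := by exact_mod_cast hw.2
  have expand : (1 - ∑ k, (w k : ℂ) • e k) ^ Fintype.card ι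
      = ∑ c : ι → κ, ((∏ i, w (c i) : ℝ) : ℂ) • ∏ i, (1 - e (c i)) := by
    have : 1 - ∑ k, (w k : ℂ) • e k = ∑ k, (w k : ℂ) • (1 - e k) := by
      simp only [smul_sub, Finset.sum_sub_distrib, ← Finset.sum_smul, hsum, one_smul]
    rw [this, ← Finset.card_univ, ← Finset.prod_const, Finset.prod_univ_sum, Fintype.piFinset_univ]
    simp only [Finset.prod_smul, Complex.ofReal_prod]
  have total : ∑ c : ι → κ, ∏ i, w (c i) = 1 := by
    rw [← Fintype.piFinset_univ, ← Finset.prod_univ_sum, hw.2, Finset.prod_const_one]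
  have weight_nonneg : ∀ c : ι → κ, 0 ≤ ∏ i, w (c i) := fun c =>
    Finset.prod_nonneg fun i _ => hw.1 _
  rw [← map_pow, expand, map_sum]
  calc ‖∑ c : ι → κ, ρ (((∏ i, w (c i) : ℝ) : ℂ) • ∏ i, (1 - e (c i)))‖
      ≤ ∑ c : ι → κ, (∏ i, w (c i)) * (2 ^ Fintype.card ι - 1 + θ) :=
        norm_sum_le_of_le _ fun c _ => by
          rw [map_smul, norm_smul, Complex.norm_of_nonneg (weight_nonneg c)]
          exact mul_le_mul_of_nonneg_left
            (h.norm_map_prod_one_sub_le ρ (fun i => he _) fun i => hρ _) (weight_nonneg c)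
    _ = 2 ^ Fintype.card ι - 1 + θ := by rw [← Finset.sum_mul, total, one_mul]

end Pisier

/-! ### The heat semigroup -/

section Heat

variable {q : ℝ≥0∞} [Fact (1 ≤ q)] {n : ℕ} {a : ℝ}

lemma prod_condExpSymbol_eq_pow_card (a : ℝ) :
    ∏ i : Fin n, (((1 - a : ℝ) : ℂ) • condExpSymbol i + (a : ℂ) • 1)
      = fun A => (a : ℂ) ^ A.card := by
  ext A
  have factor : ∀ i, (((1 - a : ℝ) : ℂ) • condExpSymbol i + (a : ℂ) • 1) A
      = if i ∈ A then (a : ℂ) else 1 := fun i => by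
    by_cases hi : i ∈ A <;> simp [condExpSymbol, hi]
  simp only [Finset.prod_apply, factor, Fintype.prod_ite_mem, Finset.prod_const]

lemma norm_multiplier_pow_card_le_one (ha₀ : 0 ≤ a) (ha₁ : a ≤ 1) :
    ‖multiplier q n X fun A => (a : ℂ) ^ A.card‖ ≤ 1 := by
  rw [← prod_condExpSymbol_eq_pow_card]
  refine norm_map_prod_le_one (multiplier q n X) fun i _ => ?_
  exact norm_map_convex_comb_one_le_one (multiplier q n X)
    (norm_multiplier_condExpSymbol_le i) ha₀ ha₁

theorem IsBConvexWith.norm_one_sub_multiplier_pow_le {ι : Type*} [Fintype ι] [Nonempty ι] {θ : ℝ}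
    (h : IsBConvexWith ι (CubeLp q n X) θ) (ha₀ : 0 ≤ a) (ha₁ : a ≤ 1) :
    ‖(1 - multiplier q n X fun A => (a : ℂ) ^ A.card) ^ Fintype.card ι‖
      ≤ 2 ^ Fintype.card ι - 1 + θ := by
  let w : Finset (Fin n) → ℝ := fun S => (1 - a) ^ S.card * a ^ (n - S.card)
  have hw : w ∈ stdSimplex ℝ (Finset (Fin n)) :=
    ⟨fun S => mul_nonneg (pow_nonneg (sub_nonneg.2 ha₁) _) (pow_nonneg ha₀ _), by
      simpa [w] using Fintype.sum_pow_mul_eq_add_pow (Fin n) (1 - a) a⟩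
  have mixture : (fun A : Finset (Fin n) => (a : ℂ) ^ A.card)
      = ∑ S, (w S : ℂ) • ∏ i ∈ S, condExpSymbol i := by
    rw [← prod_condExpSymbol_eq_pow_card, Finset.prod_add, Finset.powerset_univ]
    refine Finset.sum_congr rfl fun S _ => ?_
    simp only [w, Finset.prod_smul, Finset.prod_const, Finset.card_univ_sdiff,
      Fintype.card_fin, smul_mul_smul_comm, one_pow, mul_one, Complex.ofReal_mul,
      Complex.ofReal_pow]
  rw [mixture, ← map_one (multiplier q n X), ← map_sub]
  exact h.norm_map_one_sub_sum_pow_le _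
    (fun S => Finset.prod_induction _ _ (fun _ _ => IsIdempotentElem.mul) .one
      fun i _ => isIdempotentElem_condExpSymbol i)
    (fun S => norm_map_prod_le_one _ fun i _ => norm_multiplier_condExpSymbol_le i) hw

end Heat

/-! ### The Kato–Beurling resolvent estimate -/

section KatoBeurling

open scoped Real

universe u

variable {E : Type*} [NormedAddCommGroup E] [NormedSpace ℂ E]

lemma norm_pow_apply_le {S : E →L[ℂ] E} {a : ℝ} (hS : ‖S‖ ≤ a) (j : ℕ) (f : E) :
    ‖(S ^ j) f‖ ≤ a ^ j * ‖f‖ := by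
  induction j with
  | zero => simp
  | succ j ih =>
    rw [pow_succ', mul_apply_eq_comp, pow_succ', mul_assoc]
    exact S.le_of_opNorm_le_of_le hS ih

lemma norm_le_norm_pow_apply_add_sum (S : E →L[ℂ] E) (N : ℕ) (f : E) :
    ‖f‖ ≤ ‖(S ^ N) f‖ + ∑ j ∈ Finset.range N, ‖(S ^ j) (f - S f)‖ := by
  have neumann : f = (S ^ N) f + ∑ j ∈ Finset.range N, (S ^ j) (f - S f) := by
    have := DFunLike.congr_fun (geom_sum_mul_neg S N) f
    simp only [mul_apply_eq_comp, sum_apply, sub_apply, one_apply_eq_self] at this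
    exact eq_add_of_sub_eq' this.symm
  conv_lhs => rw [neumann]
  exact (norm_add_le _ _).trans (add_le_add_right (norm_sum_le _ _) _)

/-- With `r = c / (1 + c)` one has `f + c T f = (1 + c) (1 - r (1 - T)) f`, which is inverted by a
Neumann series up to the remainder `r ^ N (1 - T) ^ N`. -/
lemma one_sub_mul_norm_le_norm_add_smul {T : E →L[ℂ] E} (hT : ‖T‖ ≤ 1) {N : ℕ} {K : ℝ}
    (hK : ‖(1 - T) ^ N‖ ≤ K) {c c₀ : ℝ} (hc : 0 ≤ c) (hcc : c ≤ c₀) (f : E) :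
    (1 - (c₀ / (1 + c₀)) ^ N * K) * ‖f‖ ≤ N * 2 ^ N * ‖f + (c : ℂ) • T f‖ := by
  have hc₁ : 0 < 1 + c := by linarith
  have hc₁' : (1 + c : ℂ) ≠ 0 := by exact_mod_cast hc₁.ne'
  set r : ℝ := c / (1 + c) with hr
  have hr₀ : 0 ≤ r := by positivity
  have hr₁ : r ≤ 1 := (div_le_one hc₁).2 (by linarith)
  have hrc : r ≤ c₀ / (1 + c₀) := (div_le_div_iff₀ hc₁ (by linarith)).2 (by nlinarith)
  set S : E →L[ℂ] E := (r : ℂ) • (1 - T) with hS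
  have hS₂ : ‖S‖ ≤ 2 := by
    rw [hS, norm_smul, Complex.norm_of_nonneg hr₀]
    calc r * ‖1 - T‖ ≤ 1 * (1 + 1) := by
          gcongr
          exact (norm_sub_le _ _).trans (add_le_add ContinuousLinearMap.norm_id_le hT)
      _ = 2 := by norm_num
  have factor : ‖f - S f‖ ≤ ‖f + (c : ℂ) • T f‖ := by
    have : f - S f = (1 + c : ℂ)⁻¹ • (f + (c : ℂ) • T f) := by
      simp only [hS, hr, smul_apply, sub_apply, one_apply_eq_self]
      push_cast
      match_scalars <;> field_simp
      ring
    rw [this, norm_smul, norm_inv, ← Complex.ofReal_one, ← Complex.ofReal_add,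
      Complex.norm_of_nonneg hc₁.le]
    exact mul_le_of_le_one_left (norm_nonneg _) (inv_le_one_of_one_le₀ (by linarith))
  have remainder : ‖(S ^ N) f‖ ≤ (c₀ / (1 + c₀)) ^ N * K * ‖f‖ := by
    rw [hS, smul_pow, smul_apply, norm_smul, norm_pow, Complex.norm_of_nonneg hr₀, mul_assoc]
    exact mul_le_mul (pow_le_pow_left₀ hr₀ hrc N) (ContinuousLinearMap.le_of_opNorm_le _ hK f)
      (norm_nonneg _) (pow_nonneg (hr₀.trans hrc) N)
  have partial_sum : ∑ j ∈ Finset.range N, ‖(S ^ j) (f - S f)‖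
      ≤ N * 2 ^ N * ‖f + (c : ℂ) • T f‖ := by
    calc _ ≤ ∑ j ∈ Finset.range N, 2 ^ N * ‖f + (c : ℂ) • T f‖ := by
          refine Finset.sum_le_sum fun j hj => (norm_pow_apply_le hS₂ j _).trans ?_
          gcongr
          · exact one_le_two
          · exact (Finset.mem_range.1 hj).le
      _ = _ := by rw [Finset.sum_const, Finset.card_range, nsmul_eq_mul, mul_assoc]
  linarith [norm_le_norm_pow_apply_add_sum S N f]

lemma exp_pi_div_abs_im_mul {z : ℂ} (hz : z.im ≠ 0) :
    Complex.exp ((π / |z.im| : ℝ) * z) = -(Real.exp (π / |z.im| * z.re) : ℂ) := by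
  have polar : ((π / |z.im| : ℝ) : ℂ) * z
      = (π / |z.im| * z.re : ℝ) + (π / |z.im| * z.im : ℝ) * Complex.I := by
    apply Complex.ext <;> simp
  rw [polar, Complex.exp_add, Complex.ofReal_exp, ← mul_neg_one]
  congr 1
  rcases lt_or_gt_of_ne hz with h | h
  · rw [abs_of_neg h, div_neg, neg_mul, div_mul_cancel₀ _ hz]
    simp [Complex.exp_neg, Complex.exp_pi_mul_I]
  · rw [abs_of_pos h, div_mul_cancel₀ _ hz, Complex.exp_pi_mul_I]

/-- `T` is the contraction semigroup `exp (-tA)` generated by the bounded operator `-A`. The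
semigroup law enters only through the differential equation `T' = -T A`. -/
structure IsContractionSemigroup (A : E →L[ℂ] E) (T : ℝ → E →L[ℂ] E) : Prop where
  map_zero : T 0 = 1
  hasDerivAt (f : E) (t : ℝ) : HasDerivAt (fun s => T s f) (-T t (A f)) t
  norm_le_one {t : ℝ} (ht : 0 ≤ t) : ‖T t‖ ≤ 1

namespace IsContractionSemigroup

variable {A : E →L[ℂ] E} {T : ℝ → E →L[ℂ] E} {t : ℝ} {z : ℂ}

lemma hasDerivAt_exp_smul (h : IsContractionSemigroup A T) (z : ℂ) (f : E) (t : ℝ) :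
    HasDerivAt (fun s : ℝ => Complex.exp (s * z) • T s f)
      (Complex.exp (t * z) • T t (z • f - A f)) t := by
  have hexp : HasDerivAt (fun s : ℝ => Complex.exp (s * z)) (Complex.exp (t * z) * z) t := by
    simpa using ((hasDerivAt_mul_const z).cexp (x := (t : ℂ))).comp_ofReal
  refine (hexp.smul (h.hasDerivAt f t)).congr_deriv ?_
  rw [map_sub, map_smul]
  module

lemma norm_exp_smul_sub_le (h : IsContractionSemigroup A T) (ht : 0 ≤ t) (z : ℂ) (f : E) :
    ‖Complex.exp (t * z) • T t f - f‖ ≤ max 1 (Real.exp (t * z.re)) * ‖z • f - A f‖ * t := by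
  have deriv_le : ∀ s ∈ Set.Ico 0 t, ‖Complex.exp (s * z) • T s (z • f - A f)‖
      ≤ max 1 (Real.exp (t * z.re)) * ‖z • f - A f‖ := fun s hs => by
    rw [norm_smul, Complex.norm_exp, Complex.re_ofReal_mul]
    refine mul_le_mul ?_ (((T s).le_of_opNorm_le (h.norm_le_one hs.1) _).trans_eq (one_mul _))
      (norm_nonneg _) (by positivity)
    rcases le_total 0 z.re with hz | hz
    · exact le_max_of_le_right (Real.exp_le_exp.2 (mul_le_mul_of_nonneg_right hs.2.le hz))
    · exact le_max_of_le_left (Real.exp_le_one_iff.2 (mul_nonpos_of_nonneg_of_nonpos hs.1 hz))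
  simpa [h.map_zero] using norm_image_sub_le_of_norm_deriv_le_segment'
    (fun s _ => (h.hasDerivAt_exp_smul z f s).hasDerivWithinAt) deriv_le t ⟨ht, le_rfl⟩

lemma norm_mul_norm_le_of_re_le_neg_abs_im (h : IsContractionSemigroup A T)
    (hz : z.re ≤ -|z.im|) (f : E) : ‖z‖ * ‖f‖ ≤ 4 * ‖z • f - A f‖ := by
  have hnorm : ‖z‖ ≤ 2 * -z.re := by
    have := Complex.norm_le_abs_re_add_abs_im z
    rw [abs_of_nonpos (by linarith [abs_nonneg z.im])] at this
    linarith
  rcases (by linarith [abs_nonneg z.im] : 0 ≤ -z.re).eq_or_lt with h₀ | h₀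
  · rw [← h₀, mul_zero] at hnorm
    rw [hnorm.antisymm (norm_nonneg _), zero_mul]
    positivity
  set t : ℝ := (-z.re)⁻¹ with ht
  have ht₀ : 0 ≤ t := inv_nonneg.2 h₀.le
  have htz : t * z.re = -1 := by rw [ht, inv_neg, neg_mul, inv_mul_cancel₀ (by linarith)]
  have decay : ‖Complex.exp (t * z) • T t f‖ ≤ 1 / 2 * ‖f‖ := by
    rw [norm_smul, Complex.norm_exp, Complex.re_ofReal_mul, htz]
    gcongr
    · linarith [Real.exp_neg_one_lt_d9]
    · simpa using (T t).le_of_opNorm_le (h.norm_le_one ht₀) f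
  have near := h.norm_exp_smul_sub_le ht₀ z f
  rw [htz, max_eq_left (Real.exp_le_one_iff.2 (by norm_num)), one_mul] at near
  have hf : ‖f‖ ≤ 2 * ‖z • f - A f‖ * t := by
    linarith [norm_sub_norm_le f (Complex.exp (t * z) • T t f), norm_sub_rev f
      (Complex.exp (t * z) • T t f)]
  rw [ht, ← div_eq_mul_inv, le_div_iff₀ h₀] at hf
  calc ‖z‖ * ‖f‖ ≤ 2 * -z.re * ‖f‖ := by gcongr
    _ ≤ 4 * ‖z • f - A f‖ := by linarith

/-- At time `t = π / |Im z|` the number `exp (tz)` is negative, so that `exp (tz) T t f - f` falls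
under `one_sub_mul_norm_le_norm_add_smul`. -/
lemma norm_mul_norm_le_of_abs_re_le_abs_im (h : IsContractionSemigroup A T) {N : ℕ} {K κ : ℝ}
    (hK : ∀ t, 0 ≤ t → ‖(1 - T t) ^ N‖ ≤ K) (hκ : 0 ≤ κ)
    (hq : (Real.exp (π * κ) / (1 + Real.exp (π * κ))) ^ N * K < 1) (hz : |z.re| ≤ |z.im|)
    (hzκ : z.re ≤ κ * |z.im|) (f : E) :
    ‖z‖ * ‖f‖ ≤ N * 2 ^ N * Real.exp (π * κ) * π * 2 /
      (1 - (Real.exp (π * κ) / (1 + Real.exp (π * κ))) ^ N * K) * ‖z • f - A f‖ := by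
  have hnorm : ‖z‖ ≤ 2 * |z.im| := by linarith [Complex.norm_le_abs_re_add_abs_im z]
  set c₀ := Real.exp (π * κ) with hc₀
  have hq₀ := sub_pos.2 hq
  rcases (abs_nonneg z.im).eq_or_lt with h₀ | h₀
  · rw [← h₀, mul_zero] at hnorm
    rw [hnorm.antisymm (norm_nonneg _), zero_mul]
    positivity
  set t : ℝ := π / |z.im| with ht
  have ht₀ : 0 ≤ t := by positivity
  have hexp : Complex.exp (t * z) = -(Real.exp (t * z.re) : ℂ) :=
    exp_pi_div_abs_im_mul (abs_pos.1 h₀)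
  have hc : Real.exp (t * z.re) ≤ c₀ := by
    refine Real.exp_le_exp.2 ?_
    rw [ht, div_mul_eq_mul_div, div_le_iff₀ h₀, mul_assoc]
    gcongr
  have near : ‖f + (Real.exp (t * z.re) : ℂ) • T t f‖ ≤ c₀ * ‖z • f - A f‖ * t := by
    have := h.norm_exp_smul_sub_le ht₀ z f
    rw [hexp, neg_smul, ← norm_neg, neg_sub, sub_neg_eq_add] at this
    refine this.trans ?_
    gcongr
    exact max_le (Real.one_le_exp (by positivity)) hc
  have lower := one_sub_mul_norm_le_norm_add_smul (h.norm_le_one ht₀) (hK t ht₀)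
    (Real.exp_pos _).le hc f
  rw [div_mul_eq_mul_div, le_div_iff₀ hq₀]
  calc ‖z‖ * ‖f‖ * (1 - (c₀ / (1 + c₀)) ^ N * K)
      = ‖z‖ * ((1 - (c₀ / (1 + c₀)) ^ N * K) * ‖f‖) := by ring
    _ ≤ 2 * |z.im| * (N * 2 ^ N * (c₀ * ‖z • f - A f‖ * t)) := by
        refine mul_le_mul hnorm (lower.trans ?_) (by positivity) (by positivity)
        gcongr
    _ = N * 2 ^ N * c₀ * π * 2 * ‖z • f - A f‖ := by rw [ht]; field_simp

end IsContractionSemigroup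

lemma exists_sector_parameter {N : ℕ} {K : ℝ} (hK : K < 2 ^ N) :
    ∃ κ ∈ Set.Ioc (0 : ℝ) 1, (Real.exp (π * κ) / (1 + Real.exp (π * κ))) ^ N * K < 1 := by
  have hcont : ContinuousAt
      (fun κ : ℝ => (Real.exp (π * κ) / (1 + Real.exp (π * κ))) ^ N * K) 0 := by
    fun_prop (disch := positivity)
  have hzero : (Real.exp (π * 0) / (1 + Real.exp (π * 0))) ^ N * K < 1 := by
    rw [mul_zero, Real.exp_zero, one_add_one_eq_two, one_div_pow, one_div,
      inv_mul_lt_one₀ (by positivity)]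
    exact hK
  have near := (hcont.tendsto.eventually_lt_const hzero).filter_mono
    (nhdsWithin_le_nhds (s := Set.Ioi 0))
  obtain ⟨κ, hκ, hmem⟩ := (near.and (Ioc_mem_nhdsGT zero_lt_one)).exists
  exact ⟨κ, hmem, hκ⟩

lemma exists_cos_le_mul_sin {κ : ℝ} (hκ : 0 < κ) :
    ∃ γ ∈ Set.Ioo (0 : ℝ) 1, Real.cos (γ * (π / 2)) ≤ κ * Real.sin (γ * (π / 2)) := by
  have hcont : ContinuousAt
      (fun γ : ℝ => Real.cos (γ * (π / 2)) - κ * Real.sin (γ * (π / 2))) 1 := by fun_prop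
  have hone : Real.cos (1 * (π / 2)) - κ * Real.sin (1 * (π / 2)) < 0 := by simpa using hκ
  have near := (hcont.tendsto.eventually_lt_const hone).filter_mono
    (nhdsWithin_le_nhds (s := Set.Iio 1))
  obtain ⟨γ, hγ, hmem⟩ := (near.and (Ioo_mem_nhdsLT zero_lt_one)).exists
  exact ⟨γ, hmem, (sub_neg.1 hγ).le⟩

lemma re_le_mul_abs_im_of_le_abs_arg {γ κ : ℝ} (hγ : 0 ≤ γ) (hκ : 0 ≤ κ)
    (hγκ : Real.cos (γ * (π / 2)) ≤ κ * Real.sin (γ * (π / 2))) {z : ℂ}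
    (hz : γ * (π / 2) ≤ |z.arg|) : z.re ≤ κ * |z.im| := by
  rcases le_or_gt z.re 0 with hre | hre
  · exact hre.trans (by positivity)
  have harg : |z.arg| < π / 2 := Complex.abs_arg_lt_pi_div_two_iff.2 (Or.inl hre)
  have hcos : Real.cos |z.arg| ≤ κ * Real.sin |z.arg| := calc
    _ ≤ Real.cos (γ * (π / 2)) :=
        Real.cos_le_cos_of_nonneg_of_le_pi (by positivity) (by linarith [Real.pi_pos]) hz
    _ ≤ κ * Real.sin (γ * (π / 2)) := hγκ
    _ ≤ κ * Real.sin |z.arg| := by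
        gcongr
        exact Real.sin_le_sin_of_le_of_le_pi_div_two (by nlinarith [Real.pi_pos]) harg.le hz
  have him : |z.im| = ‖z‖ * Real.sin |z.arg| := by
    rw [← Real.abs_sin_eq_sin_abs_of_abs_le_pi (Complex.abs_arg_le_pi z), ← abs_norm, ← abs_mul,
      Complex.norm_mul_sin_arg]
  rw [him, ← Complex.norm_mul_cos_arg, ← Real.cos_abs, mul_left_comm]
  gcongr

/-- The resolvent estimate expressing that `A` is sectorial of angle `γ π / 2`, with constant `C`.
It is stated as a lower bound for `z - A` and does not presuppose that `z - A` is invertible. -/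
def IsSectorial (A : E →L[ℂ] E) (γ C : ℝ) : Prop :=
  ∀ z : ℂ, γ * (π / 2) ≤ |z.arg| → ∀ f : E, ‖z‖ * ‖f‖ ≤ C * ‖z • f - A f‖

/-- The Kato–Beurling theorem. The trivial bound for `‖(1 - T t) ^ N‖` is `2 ^ N`. -/
theorem exists_isSectorial_of_norm_one_sub_pow_le {N : ℕ} {K : ℝ} (hK : K < 2 ^ N) :
    ∃ γ ∈ Set.Ioo (0 : ℝ) 1, ∃ C > 0, ∀ (E : Type u) [NormedAddCommGroup E] [NormedSpace ℂ E]
      (A : E →L[ℂ] E) (T : ℝ → E →L[ℂ] E), IsContractionSemigroup A T →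
        (∀ t, 0 ≤ t → ‖(1 - T t) ^ N‖ ≤ K) → IsSectorial A γ C := by
  obtain ⟨κ, ⟨hκ₀, hκ₁⟩, hq⟩ := exists_sector_parameter hK
  obtain ⟨γ, hγ, hγκ⟩ := exists_cos_le_mul_sin hκ₀
  have := sub_pos.2 hq
  refine ⟨γ, hγ, 4 + N * 2 ^ N * Real.exp (π * κ) * π * 2 /
    (1 - (Real.exp (π * κ) / (1 + Real.exp (π * κ))) ^ N * K), by positivity,
    fun E _ _ A T hT hTK z hz f => ?_⟩
  have hzκ := re_le_mul_abs_im_of_le_abs_arg hγ.1.le hκ₀.le hγκ hz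
  rw [add_mul]
  rcases le_or_gt z.re (-|z.im|) with hre | hre
  · exact (hT.norm_mul_norm_le_of_re_le_neg_abs_im hre f).trans
      (le_add_of_nonneg_right (by positivity))
  · have habs : |z.re| ≤ |z.im| :=
      abs_le.2 ⟨hre.le, hzκ.trans (mul_le_of_le_one_left (abs_nonneg _) hκ₁)⟩
    exact (hT.norm_mul_norm_le_of_abs_re_le_abs_im hTK hκ₀.le hq habs hzκ f).trans
      (le_add_of_nonneg_left (by positivity))

end KatoBeurling

section Heat

variable {q : ℝ≥0∞} [Fact (1 ≤ q)] {n : ℕ}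

lemma hasDerivAt_multiplier_apply {m : ℝ → Finset (Fin n) → ℂ} {m' : Finset (Fin n) → ℂ} {t : ℝ}
    (hm : ∀ A, HasDerivAt (fun s => m s A) (m' A) t) (f : CubeLp q n X) :
    HasDerivAt (fun s => multiplier q n X (m s) f) (multiplier q n X m' f) t := by
  have coord : HasDerivAt (fun s ε => multiplier q n X (m s) f ε) (multiplier q n X m' f).ofLp t :=
    hasDerivAt_pi.2 fun ε => by
      simp only [multiplier_apply]
      exact HasDerivAt.fun_sum fun A _ => ((hm A).smul_const _).const_smul _
  exact ((PiLp.continuousLinearEquiv q ℝ fun _ : Fin n → Bool => X).symm.hasFDerivAt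
    |>.comp_hasDerivAt t coord)

lemma isContractionSemigroup_heat :
    IsContractionSemigroup (multiplier q n X fun A => (A.card : ℂ))
      fun t => multiplier q n X fun A => (Real.exp (-t) : ℂ) ^ A.card where
  map_zero := by
    rw [← map_one (multiplier q n X)]
    simp [Pi.one_def]
  hasDerivAt f t := by
    rw [← mul_apply_eq_comp, ← neg_apply, ← map_mul, ← map_neg]
    refine hasDerivAt_multiplier_apply (fun A => ?_) f
    have power : ∀ s : ℝ, (Real.exp (-s) : ℂ) ^ A.card = (Real.exp (A.card * -s) : ℝ) := fun s => by
      rw [Real.exp_nat_mul, Complex.ofReal_pow]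
    simp only [Pi.neg_apply, Pi.mul_apply, power]
    refine ((hasDerivAt_neg t).const_mul (A.card : ℝ)).exp.ofReal_comp.congr_deriv ?_
    push_cast
    ring
  norm_le_one ht :=
    norm_multiplier_pow_card_le_one (Real.exp_pos _).le (Real.exp_le_one_iff.2 (neg_nonpos.2 ht))

end Heat

/-! ### From resolvent bounds to a Bernstein inequality -/

section Bernstein

open scoped Real

lemma exists_differentiableOn_mul_eq {U : Set ℂ} (hU : IsOpen U) {c : ℂ} (hc : c ∈ U) {f g : ℂ → ℂ}
    (hf : DifferentiableOn ℂ f U) (hg : DifferentiableOn ℂ g U) (hfc : f c = 0)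
    (hgU : ∀ w ∈ U, g w = 0 ↔ w = c) (hg' : deriv g c ≠ 0) :
    ∃ h : ℂ → ℂ, DifferentiableOn ℂ h U ∧ ∀ w ∈ U, h w * g w = f w := by
  have hgc : g c = 0 := (hgU c hc).2 rfl
  have hslope : ∀ w ∈ U, dslope g c w ≠ 0 := fun w hw => by
    rcases eq_or_ne w c with rfl | hwc
    · rwa [dslope_same]
    · rw [dslope_of_ne _ hwc, slope_def_field, hgc, sub_zero]
      exact div_ne_zero ((hgU w hw).not.2 hwc) (sub_ne_zero.2 hwc)
  refine ⟨fun w => dslope f c w / dslope g c w,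
    ((Complex.differentiableOn_dslope (hU.mem_nhds hc)).2 hf).div
      ((Complex.differentiableOn_dslope (hU.mem_nhds hc)).2 hg) hslope, fun w hw => ?_⟩
  have hfw := sub_smul_dslope f c w
  have hgw := sub_smul_dslope g c w
  rw [hfc, sub_zero, smul_eq_mul] at hfw
  rw [hgc, sub_zero, smul_eq_mul] at hgw
  rw [← hfw, ← hgw, mul_left_comm, div_mul_cancel₀ _ (hslope w hw)]

lemma norm_sub_ofReal_le_norm_add_ofReal {z : ℂ} (hz : 0 ≤ z.re) {a : ℝ} (ha : 0 ≤ a) :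
    ‖z - a‖ ≤ ‖z + a‖ := by
  rw [← sq_le_sq₀ (norm_nonneg _) (norm_nonneg _), Complex.sq_norm, Complex.sq_norm,
    Complex.normSq_apply, Complex.normSq_apply]
  simp only [Complex.sub_re, Complex.add_re, Complex.sub_im, Complex.add_im, Complex.ofReal_re,
    Complex.ofReal_im]
  nlinarith [mul_nonneg ha hz]

lemma one_le_exp_mul_norm_sub_div_add {D : ℝ} (hD : 1 ≤ D) {a : ℝ} (ha : 0 < a) {z : ℂ}
    (hz : 2 * D * a ≤ ‖z‖) : 1 ≤ Real.exp (2 / D) * ‖(z - a) / (z + a)‖ := by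
  have hna : ‖(a : ℂ)‖ = a := Complex.norm_of_nonneg ha.le
  have hsub : ‖z‖ - a ≤ ‖z - a‖ := by simpa only [hna] using norm_sub_norm_le z a
  have hadd : ‖z‖ - a ≤ ‖z + a‖ := by
    simpa only [hna, norm_neg, sub_neg_eq_add] using norm_sub_norm_le z (-a : ℂ)
  rw [norm_div, ← mul_div_assoc, one_le_div₀ (by nlinarith)]
  calc ‖z + a‖ ≤ ‖z‖ + a := by simpa only [hna] using norm_add_le z a
    _ ≤ (2 / D + 1) * (‖z‖ - a) := by
      have hD' : 0 < D := by linarith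
      rw [div_add_one hD'.ne', div_mul_eq_mul_div, le_div_iff₀ hD']
      nlinarith
    _ ≤ Real.exp (2 / D) * ‖z - a‖ :=
      mul_le_mul (Real.add_one_le_exp _) hsub (by nlinarith) (Real.exp_pos _).le

lemma exp_add_ofReal_ne_zero {u : ℂ} (hu : |u.im| < π) {a : ℝ} (ha : 0 < a) :
    Complex.exp u + a ≠ 0 := fun h => by
  obtain ⟨hlo, hhi⟩ := abs_lt.1 hu
  have hlog := Complex.log_exp hlo hhi.le
  rw [eq_neg_of_add_eq_zero_left h, ← Complex.ofReal_neg] at hlog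
  rw [← hlog, Complex.log_im, Complex.arg_ofReal_of_neg (neg_neg_of_pos ha)] at hhi
  exact hhi.false

/-- The Blaschke product of the right half plane with zeros `j ^ (1 / γ)`, `1 ≤ j ≤ d`, written in
the logarithmic coordinate `w` for which `z = exp (w / γ)`. As `exp w = z ^ γ`, its zeros on the
strip `|Im w| < γ π` are the points where `exp w` is one of the integers `1, …, d`. -/
def blaschke (γ : ℝ) (d : ℕ) (w : ℂ) : ℂ :=
  ∏ j ∈ Finset.Icc 1 d, (Complex.exp (w / γ) - ((j : ℝ) ^ γ⁻¹ : ℝ)) /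
    (Complex.exp (w / γ) + ((j : ℝ) ^ γ⁻¹ : ℝ))

variable {γ : ℝ} {d : ℕ} {w : ℂ}

lemma blaschke_log_natCast {k : ℕ} (hk : k ∈ Finset.Icc 1 d) :
    blaschke γ d (Real.log k : ℝ) = 0 := by
  have hk₀ : (0 : ℝ) < k := by exact_mod_cast (Finset.mem_Icc.1 hk).1
  refine Finset.prod_eq_zero hk ?_
  rw [← Complex.ofReal_div, ← Complex.ofReal_exp, div_eq_mul_inv (Real.log k),
    ← Real.rpow_def_of_pos hk₀, sub_self, zero_div]

lemma differentiableOn_blaschke (hγ : 0 < γ) :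
    DifferentiableOn ℂ (blaschke γ d) {w | |w.im| < γ * π} := by
  refine DifferentiableOn.fun_finsetProd fun j hj =>
    DifferentiableOn.div (by fun_prop) (by fun_prop) fun w (hw : |w.im| < γ * π) => ?_
  have hj₀ : (0 : ℝ) < j := by exact_mod_cast (Finset.mem_Icc.1 hj).1
  have him : |(w / γ).im| < π := by
    rwa [Complex.div_ofReal_im, abs_div, abs_of_pos hγ, div_lt_iff₀ hγ, mul_comm]
  exact exp_add_ofReal_ne_zero him (by positivity)

lemma norm_blaschke_le_one (hγ : 0 < γ) (hw : |w.im| ≤ γ * (π / 2)) : ‖blaschke γ d w‖ ≤ 1 := by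
  have him : |w.im / γ| ≤ π / 2 := by
    rwa [abs_div, abs_of_pos hγ, div_le_iff₀ hγ, mul_comm]
  have hre : 0 ≤ (Complex.exp (w / γ)).re := by
    rw [Complex.exp_re, Complex.div_ofReal_im]
    exact mul_nonneg (Real.exp_pos _).le (Real.cos_nonneg_of_mem_Icc (abs_le.1 him))
  rw [blaschke, norm_prod]
  refine Finset.prod_le_one (fun _ _ => norm_nonneg _) fun j _ => ?_
  rw [norm_div]
  exact div_le_one_of_le₀ (norm_sub_ofReal_le_norm_add_ofReal hre (by positivity)) (norm_nonneg _)

lemma one_le_exp_two_mul_norm_blaschke (hγ : 0 < γ) (hγ₁ : γ ≤ 1) (hd : 1 ≤ d)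
    (hw : ‖Complex.exp w‖ = 2 * (d : ℝ) ^ (1 + γ)) : 1 ≤ Real.exp 2 * ‖blaschke γ d w‖ := by
  have hd₁ : (1 : ℝ) ≤ d := by exact_mod_cast hd
  have hnorm : ‖Complex.exp (w / γ)‖ = 2 ^ γ⁻¹ * (d * (d : ℝ) ^ γ⁻¹) := by
    rw [Complex.norm_exp, Complex.div_ofReal_re, div_eq_mul_inv, Real.exp_mul, ← Complex.norm_exp,
      hw, Real.mul_rpow two_pos.le (by positivity), ← Real.rpow_mul (by positivity), add_mul,
      mul_inv_cancel₀ hγ.ne', one_mul, add_comm, Real.rpow_add (by positivity), Real.rpow_one]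
  have hlarge : ∀ j ∈ Finset.Icc 1 d, 2 * d * (j : ℝ) ^ γ⁻¹ ≤ ‖Complex.exp (w / γ)‖ :=
      fun j hj => by
    have hjd : (j : ℝ) ≤ d := by exact_mod_cast (Finset.mem_Icc.1 hj).2
    rw [hnorm, mul_assoc]
    gcongr
    exact Real.self_le_rpow_of_one_le one_le_two ((one_le_inv₀ hγ).2 hγ₁)
  have hexp : Real.exp 2 = ∏ _j ∈ Finset.Icc 1 d, Real.exp (2 / d) := by
    rw [Finset.prod_const, Nat.card_Icc, Nat.add_sub_cancel, ← Real.exp_nat_mul,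
      mul_div_cancel₀ _ (by positivity)]
  rw [blaschke, norm_prod, hexp, ← Finset.prod_mul_distrib]
  refine Finset.one_le_prod fun j hj => ?_
  have hj₀ : (0 : ℝ) < j := by exact_mod_cast (Finset.mem_Icc.1 hj).1
  exact one_le_exp_mul_norm_sub_div_add hd₁ (by positivity) (hlarge j hj)

lemma exists_differentiableOn_eq_blaschke_mul (hγ : 0 < γ) (hγ₁ : γ ≤ 1) {k : ℕ} (hk : k ≤ d) :
    ∃ h : ℂ → ℂ, DifferentiableOn ℂ h {w | |w.im| < γ * π} ∧
      ∀ w : ℂ, |w.im| < γ * π → Complex.exp w ≠ k →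
        h w = blaschke γ d w * (Complex.exp w / (Complex.exp w - k)) := by
  rcases Nat.eq_zero_or_pos k with rfl | hk₀
  · exact ⟨blaschke γ d, differentiableOn_blaschke hγ, fun w _ _ => by simp⟩
  have hk₀' : (0 : ℝ) < k := by exact_mod_cast hk₀
  have hexp : Complex.exp (Real.log k : ℝ) = k := by
    rw [← Complex.ofReal_exp, Real.exp_log hk₀', Complex.ofReal_natCast]
  have hlog : (Real.log k : ℂ) ∈ {w : ℂ | |w.im| < γ * π} := by
    rw [Set.mem_ofPred_eq, Complex.ofReal_im, abs_zero]
    positivity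
  have zero_iff : ∀ w ∈ {w : ℂ | |w.im| < γ * π}, Complex.exp w - k = 0 ↔ w = Real.log k := by
    refine fun w (hw : |w.im| < γ * π) => ⟨fun h => ?_, ?_⟩
    · have him := abs_lt.1 (hw.trans_le (mul_le_of_le_one_left Real.pi_pos.le hγ₁))
      rw [← Complex.log_exp him.1 him.2.le, sub_eq_zero.1 h, Complex.ofReal_log hk₀'.le,
        Complex.ofReal_natCast]
    · rintro rfl
      rw [hexp, sub_self]
  obtain ⟨h, hdiff, hmul⟩ := exists_differentiableOn_mul_eq (isOpen_lt (by fun_prop) (by fun_prop))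
    hlog ((differentiableOn_blaschke hγ).mul Complex.differentiable_exp.differentiableOn)
    (by fun_prop)
    (by rw [Pi.mul_apply, blaschke_log_natCast (Finset.mem_Icc.2 ⟨hk₀, hk⟩), zero_mul])
    zero_iff (by simp)
  exact ⟨h, hdiff, fun w hw hne => by
    rw [← mul_div_assoc, eq_div_iff (sub_ne_zero.2 hne), hmul w hw, Pi.mul_apply]⟩

lemma norm_le_two_mul_norm_sub_natCast {k : ℕ} (hk : k ≤ d) {z : ℂ}
    (hz : 2 * (d : ℝ) ≤ ‖z‖ ∨ ‖z‖ ≤ 1 / 2) : ‖z‖ ≤ 2 * ‖z - k‖ := by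
  have hkd : (k : ℝ) ≤ d := by exact_mod_cast hk
  have hnk : ‖(k : ℂ)‖ = k := Complex.norm_natCast k
  rcases Nat.eq_zero_or_pos k with rfl | hk₀
  · simp only [Nat.cast_zero, sub_zero]
    linarith [norm_nonneg z]
  have hk₁ : (1 : ℝ) ≤ k := by exact_mod_cast hk₀
  rcases hz with hz | hz
  · linarith [norm_sub_norm_le z k]
  · linarith [norm_sub_norm_le (k : ℂ) z, norm_sub_rev (k : ℂ) z]

lemma ne_natCast_of_le_abs_arg {z : ℂ} (hγ : 0 < γ) (hz₀ : z ≠ 0) (hz : γ * (π / 2) ≤ |z.arg|)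
    (k : ℕ) : z ≠ k := by
  rintro rfl
  rw [Complex.natCast_arg, abs_zero] at hz
  exact hz.not_gt (by positivity)

variable {ι Y : Type*} [NormedAddCommGroup Y] [NormedSpace ℂ Y] {s : Finset ι} {ν : ι → ℕ}
  {x : ι → Y} {B : ℝ}

lemma exists_differentiableOn_eq_blaschke_smul_sum (hγ : 0 < γ) (hγ₁ : γ ≤ 1)
    (hν : ∀ i ∈ s, ν i ≤ d) (x : ι → Y) :
    ∃ F : ℂ → Y, DifferentiableOn ℂ F {w | |w.im| < γ * π} ∧
      ∀ w : ℂ, |w.im| < γ * π → (∀ i ∈ s, Complex.exp w ≠ ν i) →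
        F w = blaschke γ d w • ∑ i ∈ s, (Complex.exp w / (Complex.exp w - ν i)) • x i := by
  choose! h hdiff h_eq using fun i (hi : i ∈ s) =>
    exists_differentiableOn_eq_blaschke_mul hγ hγ₁ (hν i hi)
  refine ⟨fun w => ∑ i ∈ s, h i w • x i,
    DifferentiableOn.fun_sum fun i hi => (hdiff i hi).smul_const _, fun w hw hne => ?_⟩
  rw [Finset.smul_sum]
  exact Finset.sum_congr rfl fun i hi => by rw [h_eq i hi w hw (hne i hi), mul_smul]

lemma norm_sum_div_sub_natCast_smul_le (hν : ∀ i ∈ s, ν i ≤ d) {z : ℂ}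
    (hz : 2 * (d : ℝ) ≤ ‖z‖ ∨ ‖z‖ ≤ 1 / 2) :
    ‖∑ i ∈ s, (z / (z - ν i)) • x i‖ ≤ ∑ i ∈ s, 2 * ‖x i‖ := by
  refine norm_sum_le_of_le s fun i hi => ?_
  rw [norm_smul, norm_div]
  gcongr
  exact div_le_of_le_mul₀ (norm_nonneg _) two_pos.le
    (norm_le_two_mul_norm_sub_natCast (hν i hi) hz)

lemma two_mul_le_norm_exp_or_norm_exp_le_half (hd : 1 ≤ d) (hw : Real.log (2 * d) ≤ |w.re|) :
    2 * (d : ℝ) ≤ ‖Complex.exp w‖ ∨ ‖Complex.exp w‖ ≤ 1 / 2 := by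
  have hd₁ : (1 : ℝ) ≤ d := by exact_mod_cast hd
  rw [Complex.norm_exp]
  rcases le_abs.1 hw with h | h
  · exact Or.inl ((Real.log_le_iff_le_exp (by positivity)).1 h)
  · rw [Real.log_le_iff_le_exp (by positivity), Real.exp_neg] at h
    refine Or.inr ?_
    rw [one_div]
    exact (le_inv_comm₀ two_pos (Real.exp_pos _)).1 (le_trans (by linarith) h)

lemma norm_le_of_forall_abs_im_eq {b b' : ℝ} (hb : 0 < b) (hbb' : b < b') {F : ℂ → Y}
    (hF : DifferentiableOn ℂ F {w | |w.im| < b'}) {R M : ℝ}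
    (hM : ∀ w : ℂ, |w.im| ≤ b → R ≤ |w.re| → ‖F w‖ ≤ M) (hB : ∀ w : ℂ, |w.im| = b → ‖F w‖ ≤ B)
    (hw : |w.im| ≤ b) : ‖F w‖ ≤ B := by
  obtain ⟨hlo, hhi⟩ := abs_le.1 hw
  have hclosure : closure (Complex.im ⁻¹' Set.Ioo (-b) b) ⊆ {w | |w.im| < b'} := by
    rw [Complex.closure_preimage_im, closure_Ioo (neg_lt_self hb).ne]
    exact fun w hw => (abs_le.2 hw).trans_lt hbb'
  refine PhragmenLindelof.horizontal_strip (hF.mono hclosure).diffContOnCl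
    ⟨0, div_pos Real.pi_pos (by linarith), 0, ?_⟩ (fun w hw => hB w ?_) (fun w hw => hB w ?_)
    hlo hhi
  · refine Asymptotics.IsBigO.of_bound M ?_
    rw [Filter.eventually_inf_principal]
    filter_upwards [Filter.preimage_mem_comap (Filter.eventually_ge_atTop R)] with w hre him
    simpa using hM w (abs_le.2 ⟨him.1.le, him.2.le⟩) hre
  · rw [hw, abs_neg, abs_of_pos hb]
  · rw [hw, abs_of_pos hb]

/-- The Phragmén–Lindelöf principle applies on the strip `|Im w| ≤ γ π / 2` because `exp` maps its
boundary into the sector where the resolvent is controlled. -/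
lemma norm_blaschke_smul_sum_le (hγ : 0 < γ) (hγ₁ : γ ≤ 1) (hd : 1 ≤ d) (hν : ∀ i ∈ s, ν i ≤ d)
    (hB : ∀ z : ℂ, z ≠ 0 → γ * (π / 2) ≤ |z.arg| → ‖∑ i ∈ s, (z / (z - ν i)) • x i‖ ≤ B)
    (hw : |w.im| ≤ γ * (π / 2)) (hwν : ∀ i ∈ s, Complex.exp w ≠ ν i) :
    ‖blaschke γ d w • ∑ i ∈ s, (Complex.exp w / (Complex.exp w - ν i)) • x i‖ ≤ B := by
  have hγπ : γ * (π / 2) < γ * π := by nlinarith [Real.pi_pos]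
  obtain ⟨F, hdiff, hF⟩ := exists_differentiableOn_eq_blaschke_smul_sum hγ hγ₁ hν x
  have norm_F_le : ∀ w : ℂ, |w.im| ≤ γ * (π / 2) → (∀ i ∈ s, Complex.exp w ≠ ν i) →
      ‖F w‖ ≤ ‖∑ i ∈ s, (Complex.exp w / (Complex.exp w - ν i)) • x i‖ := fun w hw hne => by
    rw [hF w (hw.trans_lt hγπ) hne, norm_smul]
    exact mul_le_of_le_one_left (norm_nonneg _) (norm_blaschke_le_one hγ hw)
  have far : ∀ w : ℂ, |w.im| ≤ γ * (π / 2) → Real.log (2 * d) ≤ |w.re| →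
      ‖F w‖ ≤ ∑ i ∈ s, 2 * ‖x i‖ := fun w hw hre => by
    have hlarge := two_mul_le_norm_exp_or_norm_exp_le_half hd hre
    refine (norm_F_le w hw fun i hi => ?_).trans (norm_sum_div_sub_natCast_smul_le hν hlarge)
    rw [← sub_ne_zero, ← norm_pos_iff]
    linarith [norm_pos_iff.2 (Complex.exp_ne_zero w),
      norm_le_two_mul_norm_sub_natCast (hν i hi) hlarge]
  have boundary : ∀ w : ℂ, |w.im| = γ * (π / 2) → ‖F w‖ ≤ B := fun w hw => by
    have him := abs_lt.1 (show |w.im| < π by nlinarith [Real.pi_pos])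
    have harg : γ * (π / 2) ≤ |(Complex.exp w).arg| := by
      rw [← Complex.log_im, Complex.log_exp him.1 him.2.le, hw]
    exact (norm_F_le w hw.le fun i _ =>
      ne_natCast_of_le_abs_arg hγ (Complex.exp_ne_zero w) harg _).trans
      (hB _ (Complex.exp_ne_zero w) harg)
  rw [← hF w (hw.trans_lt hγπ) hwν]
  exact norm_le_of_forall_abs_im_eq (by positivity) hγπ hdiff far boundary hw

lemma norm_sum_div_sub_natCast_smul_le_exp_two_mul (hγ : 0 < γ) (hγ₁ : γ ≤ 1) (hd : 1 ≤ d)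
    (hν : ∀ i ∈ s, ν i ≤ d)
    (hB : ∀ z : ℂ, z ≠ 0 → γ * (π / 2) ≤ |z.arg| → ‖∑ i ∈ s, (z / (z - ν i)) • x i‖ ≤ B)
    {z : ℂ} (hz : ‖z‖ = 2 * (d : ℝ) ^ (1 + γ)) :
    ‖∑ i ∈ s, (z / (z - ν i)) • x i‖ ≤ Real.exp 2 * B := by
  have hd₁ : (1 : ℝ) ≤ d := by exact_mod_cast hd
  have hdz : d < ‖z‖ := by
    rw [hz]
    linarith [Real.self_le_rpow_of_one_le hd₁ (show 1 ≤ 1 + γ by linarith)]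
  have hz₀ : z ≠ 0 := norm_pos_iff.1 (by linarith)
  rcases le_total (γ * (π / 2)) |z.arg| with harg | harg
  · have hzB := hB z hz₀ harg
    exact hzB.trans (le_mul_of_one_le_left ((norm_nonneg _).trans hzB) (Real.one_le_exp two_pos.le))
  · have hexp : Complex.exp (Complex.log z) = z := Complex.exp_log hz₀
    have hne : ∀ i ∈ s, z ≠ ν i := fun i hi h => by
      rw [h, Complex.norm_natCast] at hdz
      exact (hν i hi).not_gt (by exact_mod_cast hdz)
    have strip := norm_blaschke_smul_sum_le (w := Complex.log z) hγ hγ₁ hd hν hB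
      (by rwa [Complex.log_im]) (by rwa [hexp])
    rw [hexp, norm_smul] at strip
    calc _ ≤ Real.exp 2 * ‖blaschke γ d (Complex.log z)‖ * ‖∑ i ∈ s, (z / (z - ν i)) • x i‖ :=
          le_mul_of_one_le_left (norm_nonneg _)
            (one_le_exp_two_mul_norm_blaschke hγ hγ₁ hd (by rw [hexp, hz]))
      _ ≤ Real.exp 2 * B := by rw [mul_assoc]; gcongr

lemma hasDerivAt_sum_inv_one_sub_mul_smul (s : Finset ι) (ν : ι → ℕ) (x : ι → Y) :
    HasDerivAt (fun ζ : ℂ => ∑ i ∈ s, (1 - ν i * ζ)⁻¹ • x i) (∑ i ∈ s, (ν i : ℂ) • x i) 0 := by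
  refine HasDerivAt.fun_sum fun i _ => HasDerivAt.smul_const ?_ _
  simpa using (((hasDerivAt_id (0 : ℂ)).const_mul (ν i : ℂ)).const_sub 1).fun_inv (by simp)

/-- The sum `∑ ν i • x i` is the derivative at `ζ = 0` of `∑ (1 - ν i ζ)⁻¹ • x i`, which Cauchy's
estimate bounds by the values on the circle `z = ζ⁻¹` of radius `2 d ^ (1 + γ)`. -/
theorem norm_sum_natCast_smul_le (hγ : 0 < γ) (hγ₁ : γ ≤ 1) (hd : 1 ≤ d) (hν : ∀ i ∈ s, ν i ≤ d)
    (hB : ∀ z : ℂ, z ≠ 0 → γ * (π / 2) ≤ |z.arg| → ‖∑ i ∈ s, (z / (z - ν i)) • x i‖ ≤ B) :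
    ‖∑ i ∈ s, (ν i : ℂ) • x i‖ ≤ Real.exp 2 * B * (2 * (d : ℝ) ^ (1 + γ)) := by
  have hd₁ : (1 : ℝ) ≤ d := by exact_mod_cast hd
  set r := 2 * (d : ℝ) ^ (1 + γ)
  have hdr : d < r := by linarith [Real.self_le_rpow_of_one_le hd₁ (show 1 ≤ 1 + γ by linarith)]
  have hr₀ : 0 < r := by linarith
  have hden : ∀ ζ : ℂ, ‖ζ‖ ≤ r⁻¹ → ∀ i ∈ s, 1 - ν i * ζ ≠ 0 := fun ζ hζ i hi h => by
    have hνd : (ν i : ℝ) ≤ d := by exact_mod_cast hν i hi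
    have hone : ν i * ‖ζ‖ = 1 := by simpa using congrArg norm (sub_eq_zero.1 h).symm
    have : ν i * ‖ζ‖ ≤ d * r⁻¹ := by gcongr
    exact ((div_lt_one hr₀).2 hdr).not_ge (hone.symm.trans_le this)
  have hdiff : DiffContOnCl ℂ (fun ζ : ℂ => ∑ i ∈ s, (1 - ν i * ζ)⁻¹ • x i)
      (Metric.ball 0 r⁻¹) := by
    refine DifferentiableOn.diffContOnCl ?_
    rw [closure_ball _ (inv_pos.2 hr₀).ne']
    refine DifferentiableOn.fun_sum fun i hi => DifferentiableOn.smul_const ?_ _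
    exact DifferentiableOn.fun_inv (by fun_prop) fun ζ hζ =>
      hden ζ (by simpa using hζ) i hi
  have hsphere : ∀ ζ ∈ Metric.sphere (0 : ℂ) r⁻¹,
      ‖∑ i ∈ s, (1 - ν i * ζ)⁻¹ • x i‖ ≤ Real.exp 2 * B := fun ζ hζ => by
    rw [mem_sphere_zero_iff_norm] at hζ
    have hζ₀ : ζ ≠ 0 := norm_pos_iff.1 (hζ ▸ inv_pos.2 hr₀)
    convert norm_sum_div_sub_natCast_smul_le_exp_two_mul (z := ζ⁻¹) hγ hγ₁ hd hν hB
      (by rw [norm_inv, hζ, inv_inv]) using 5 with i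
    rw [← one_div_div, sub_div, div_self (inv_ne_zero hζ₀), div_inv_eq_mul, one_div]
  have cauchy := Complex.norm_deriv_le_of_forall_mem_sphere_norm_le (inv_pos.2 hr₀) hdiff hsphere
  rwa [(hasDerivAt_sum_inv_one_sub_mul_smul s ν x).deriv, div_inv_eq_mul] at cauchy

end Bernstein

/-! ### The Laplacian on the cube -/

section Laplacian

open scoped Real

variable {n d : ℕ} {p γ C : ℝ}

lemma lpNorm_eq_mul_norm_toLp {Y : Type*} [NormedAddCommGroup Y] (hp : 0 < p)
    [Fact (1 ≤ ENNReal.ofReal p)] (f : (Fin n → Bool) → Y) :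
    lpNorm p f = ((2 ^ n : ℝ)⁻¹) ^ (1 / p) * ‖WithLp.toLp (ENNReal.ofReal p) f‖ := by
  rw [lpNorm, ← norm_rpow_eq_sum hp (WithLp.toLp (ENNReal.ofReal p) f),
    Real.mul_rpow (by positivity) (by positivity), one_div,
    Real.rpow_rpow_inv (norm_nonneg _) hp.ne']

variable {q : ℝ≥0∞} [Fact (1 ≤ q)]

lemma toLp_lap (f : CubeLp q n X) :
    WithLp.toLp q (lap f) = multiplier q n X (fun A => (A.card : ℂ)) f := by
  ext ε
  rw [multiplier_apply, PiLp.toLp_apply, lap]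
  refine Finset.sum_congr rfl fun A _ => ?_
  rw [smul_comm, ← Complex.ofReal_natCast, Complex.coe_smul]

lemma multiplier_eq_sum_smul (m : Finset (Fin n) → ℂ) {f : CubeLp q n X} (hf : degLE f d) :
    multiplier q n X m f
      = ∑ A with A.card ≤ d, m A • multiplier q n X (Pi.single A 1) f := by
  have decompose : m = ∑ A, m A • Pi.single A (1 : ℂ) := by
    simpa only [← Pi.single_smul, smul_eq_mul, mul_one] using
      (Finset.univ_sum_single m).symm
  have vanish : ∀ A ∈ Finset.univ, m A • multiplier q n X (Pi.single A 1) f ≠ 0 →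
      A.card ≤ d := fun A _ => by
    contrapose!
    intro hA
    have : multiplier q n X (Pi.single A 1) f = 0 := by
      ext ε
      rw [multiplier_apply, Finset.sum_eq_single A (fun B _ hB => by simp [hB]) (by simp)]
      rw [hf A hA, smul_zero, smul_zero, PiLp.zero_apply]
    rw [this, smul_zero]
  rw [Finset.sum_filter_of_ne vanish]
  conv_lhs => rw [decompose]
  simp only [map_sum, map_smul, sum_apply, smul_apply]

lemma IsSectorial.norm_multiplier_div_sub_card_le (hγ : 0 < γ)
    (h : IsSectorial (multiplier q n X fun A => (A.card : ℂ)) γ C)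
    {z : ℂ} (hz₀ : z ≠ 0) (hz : γ * (π / 2) ≤ |z.arg|) (f : CubeLp q n X) :
    ‖multiplier q n X (fun A => z / (z - A.card)) f‖ ≤ C * ‖f‖ := by
  set g := multiplier q n X (fun A => (z - A.card)⁻¹) f with hg
  have hzg : z • g = multiplier q n X (fun A => z / (z - A.card)) f := by
    rw [hg, ← smul_apply, ← map_smul]
    rfl
  have inverse : z • g - multiplier q n X (fun A => (A.card : ℂ)) g = f := by
    have hsymbol : (fun A : Finset (Fin n) => z / (z - A.card)) -
        (fun A => (A.card : ℂ)) * (fun A => (z - A.card)⁻¹) = 1 := funext fun A => by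
      simp only [Pi.sub_apply, Pi.mul_apply, Pi.one_apply, div_eq_mul_inv, ← sub_mul]
      exact mul_inv_cancel₀ (sub_ne_zero.2 (ne_natCast_of_le_abs_arg hγ hz₀ hz _))
    rw [hzg, hg, ← mul_apply_eq_comp, ← map_mul, ← sub_apply, ← map_sub, hsymbol, map_one,
      one_apply_eq_self]
  calc _ = ‖z‖ * ‖g‖ := by rw [← hzg, norm_smul]
    _ ≤ C * ‖f‖ := by simpa only [inverse] using h z hz g

lemma IsSectorial.norm_multiplier_card_le (hγ : 0 < γ) (hγ₁ : γ ≤ 1)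
    (h : IsSectorial (multiplier q n X fun A => (A.card : ℂ)) γ C)
    (hd : 1 ≤ d) {f : CubeLp q n X} (hf : degLE f d) :
    ‖multiplier q n X (fun A => (A.card : ℂ)) f‖
      ≤ Real.exp 2 * (C * ‖f‖) * (2 * (d : ℝ) ^ (1 + γ)) := by
  rw [multiplier_eq_sum_smul _ hf]
  refine norm_sum_natCast_smul_le hγ hγ₁ hd (fun A hA => (Finset.mem_filter.1 hA).2)
    fun z hz₀ hz => ?_
  rw [← multiplier_eq_sum_smul (fun A => z / (z - A.card)) hf]
  exact h.norm_multiplier_div_sub_card_le hγ hz₀ hz f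

theorem KConvex.exists_isSectorial (hX : KConvex X) (hp : 1 < p)
    [Fact (1 ≤ ENNReal.ofReal p)] :
    ∃ γ ∈ Set.Ioo (0 : ℝ) 1, ∃ C > 0, ∀ n : ℕ, IsSectorial
      (multiplier (ENNReal.ofReal p) n X fun A => (A.card : ℂ)) γ C := by
  obtain ⟨k, θ, hθ, hBconvex⟩ := hX.exists_isBConvexWith
  obtain ⟨θ', hθ', hBconvexLp⟩ := hBconvex.exists_piLp hθ hp
  obtain ⟨γ, hγ, C, hC, hsector⟩ := exists_isSectorial_of_norm_one_sub_pow_le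
    (N := Fintype.card (Fin k → Bool)) (show 2 ^ Fintype.card (Fin k → Bool) - 1 + θ' <
      2 ^ Fintype.card (Fin k → Bool) by linarith)
  exact ⟨γ, hγ, C, hC, fun n => hsector _ _ _ isContractionSemigroup_heat fun t ht =>
    (hBconvexLp (Fin n → Bool)).norm_one_sub_multiplier_pow_le (Real.exp_pos _).le
      (Real.exp_le_one_iff.2 (neg_nonpos.2 ht))⟩

end Laplacian

theorem stmt7_general {X : Type*} [NormedAddCommGroup X] [NormedSpace ℂ X] (hX : KConvex X)
    (p : ℝ) (hp : 1 < p) :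
    ∃ α : ℝ, 1 ≤ α ∧ α < 2 ∧ ∃ C : ℝ, 0 < C ∧
      ∀ n d : ℕ, 1 ≤ d → ∀ f : (Fin n → Bool) → X, degLE f d →
        lpNorm p (lap f) ≤ C * (d : ℝ) ^ α * lpNorm p f := by
  have : Fact (1 ≤ ENNReal.ofReal p) := ⟨ENNReal.one_le_ofReal.2 hp.le⟩
  have hp₀ : 0 < p := by linarith
  obtain ⟨γ, ⟨hγ₀, hγ₁⟩, C, hC, hsector⟩ := hX.exists_isSectorial hp
  refine ⟨1 + γ, by linarith, by linarith, 2 * Real.exp 2 * C, by positivity,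
    fun n d hd f hf => ?_⟩
  have bernstein := (hsector n).norm_multiplier_card_le hγ₀ hγ₁.le hd
    (f := WithLp.toLp (ENNReal.ofReal p) f) hf
  rw [← toLp_lap] at bernstein
  rw [lpNorm_eq_mul_norm_toLp hp₀, lpNorm_eq_mul_norm_toLp hp₀]
  calc _ ≤ ((2 ^ n : ℝ)⁻¹) ^ (1 / p) * (Real.exp 2 * (C * ‖WithLp.toLp (ENNReal.ofReal p) f‖) *
          (2 * (d : ℝ) ^ (1 + γ))) := by gcongr
    _ = _ := by ring

/-- **Improved Bernstein–Markov inequality for the Laplacian** on `K`-convex spaces. -/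
theorem stmt7 {X : Type*} [NormedAddCommGroup X] [NormedSpace ℂ X] [CompleteSpace X]
    (hX : KConvex X) (p : ℝ) (hp : 1 < p) :
    ∃ α : ℝ, 1 ≤ α ∧ α < 2 ∧ ∃ C : ℝ, 0 < C ∧
      ∀ n d : ℕ, 1 ≤ d → d ≤ n → ∀ f : (Fin n → Bool) → X, degLE f d →
        lpNorm p (lap f) ≤ C * (d : ℝ) ^ α * lpNorm p f := by
  obtain ⟨α, h₁, h₂, C, hC, h⟩ := stmt7_general hX p hp
  exact ⟨α, h₁, h₂, C, hC, fun n d hd _ => h n d hd⟩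

end HammingCube
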